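/- In the affine rock–paper–scissors chain with parameter α > −2, almost surely M_n = X_n Y_n Z_n converges to a limit M ∈ [0, 1/27), the law of M gives positive probability to every nonempty open subinterval of (0, 1/27), the sequence (X_n, Y_n, Z_n) almost surely does not converge, and almost surely the set of cluster points (limit points) of (X_n, Y_n, Z_n) is exactly {(x,y,z) ∈ Δ² : x y z = M}. -/

import Mathlib

open MeasureTheory ProbabilityTheory Filter Set Topology

noncomputable section

/-- `γ_n = γ₀ + (4+α) n`. -/
def affGamma (γ₀ α : ℝ) (n : ℕ) : ℝ := γ₀ + (4 + α) * n

/-- The increments to the (unnormalised) attachment weights of the three types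
for each of the six possible transitions in the affine model. -/
def affIncr (α : ℝ) : Fin 6 → ℝ × ℝ × ℝ
  | 0 => (4 + α, 0, 0)
  | 1 => (0, 4 + α, 0)
  | 2 => (0, 0, 4 + α)
  | 3 => (1, 3 + α, 0)
  | 4 => (0, 1, 3 + α)
  | 5 => (3 + α, 0, 1)

/-- The conditional probability of each of the six possible transitions,
as a function of the current state `(x, y, z)`. -/
def affProb (i : Fin 6) (x y z : ℝ) : ℝ :=
  match i with
  | 0 => x ^ 2
  | 1 => y ^ 2
  | 2 => z ^ 2
  | 3 => 2 * x * y
  | 4 => 2 * y * z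
  | 5 => 2 * z * x

/-- The affine rock–paper–scissors preferential attachment chain with parameter `α`. -/
structure AffRPSChain {Ω : Type*} [MeasurableSpace Ω] (μ : Measure Ω) (α γ₀ : ℝ) where
  F : Filtration ℕ ‹MeasurableSpace Ω›
  X : ℕ → Ω → ℝ
  Y : ℕ → Ω → ℝ
  Z : ℕ → Ω → ℝ
  adapted_X : Adapted F X
  adapted_Y : Adapted F Y
  adapted_Z : Adapted F Z
  nonneg_X : ∀ n ω, 0 ≤ X n ω
  nonneg_Y : ∀ n ω, 0 ≤ Y n ω
  nonneg_Z : ∀ n ω, 0 ≤ Z n ω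
  sum_eq_one : ∀ n ω, X n ω + Y n ω + Z n ω = 1
  init_X_pos : ∀ ω, 0 < X 0 ω
  init_Y_pos : ∀ ω, 0 < Y 0 ω
  init_Z_pos : ∀ ω, 0 < Z 0 ω
  init_X_const : ∀ ω ω', X 0 ω = X 0 ω'
  init_Y_const : ∀ ω ω', Y 0 ω = Y 0 ω'
  init_Z_const : ∀ ω ω', Z 0 ω = Z 0 ω'
  step : ∀ (n : ℕ) (i : Fin 6),
    μ[Set.indicator
        {ω | X (n+1) ω = (affGamma γ₀ α n * X n ω + (affIncr α i).1) / affGamma γ₀ α (n+1) ∧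
             Y (n+1) ω = (affGamma γ₀ α n * Y n ω + (affIncr α i).2.1) / affGamma γ₀ α (n+1) ∧
             Z (n+1) ω = (affGamma γ₀ α n * Z n ω + (affIncr α i).2.2) / affGamma γ₀ α (n+1)}
        (fun _ => (1 : ℝ)) | F n]
      =ᵐ[μ] fun ω => affProb i (X n ω) (Y n ω) (Z n ω)

namespace RPS

/-- states -/
abbrev St := ℝ × ℝ × ℝ

/-- the transition maps -/
def T (γ₀ α : ℝ) (n : ℕ) (i : Fin 6) (s : St) : St :=
  ((affGamma γ₀ α n * s.1 + (affIncr α i).1) / affGamma γ₀ α (n+1),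
   (affGamma γ₀ α n * s.2.1 + (affIncr α i).2.1) / affGamma γ₀ α (n+1),
   (affGamma γ₀ α n * s.2.2 + (affIncr α i).2.2) / affGamma γ₀ α (n+1))

/-- transition probabilities -/
def pr (i : Fin 6) (s : St) : ℝ := affProb i s.1 s.2.1 s.2.2

/-- good states -/
def Good (γ₀ α m : ℝ) (n : ℕ) (s : St) : Prop :=
  s.1 + s.2.1 + s.2.2 = 1 ∧ m ≤ affGamma γ₀ α n * s.1 ∧ m ≤ affGamma γ₀ α n * s.2.1 ∧
    m ≤ affGamma γ₀ α n * s.2.2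

lemma gam_ge {γ₀ α : ℝ} (hα : -2 < α) (hγ₀ : 2 ≤ γ₀) (n : ℕ) : 2 ≤ affGamma γ₀ α n := by
  unfold affGamma
  have : (0:ℝ) ≤ n := Nat.cast_nonneg n
  nlinarith

lemma gam_succ (γ₀ α : ℝ) (n : ℕ) : affGamma γ₀ α (n+1) = affGamma γ₀ α n + (4 + α) := by
  unfold affGamma
  push_cast
  ring

lemma incr_facts {α : ℝ} (hα : -2 < α) (i : Fin 6) :
    (0 ≤ (affIncr α i).1 ∧ (affIncr α i).1 ≤ 4 + α) ∧
    (0 ≤ (affIncr α i).2.1 ∧ (affIncr α i).2.1 ≤ 4 + α) ∧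
    (0 ≤ (affIncr α i).2.2 ∧ (affIncr α i).2.2 ≤ 4 + α) ∧
    (affIncr α i).1 + (affIncr α i).2.1 + (affIncr α i).2.2 = 4 + α := by
  fin_cases i <;> simp only [affIncr] <;> refine ⟨⟨?_, ?_⟩, ⟨?_, ?_⟩, ⟨?_, ?_⟩, ?_⟩ <;> linarith

lemma Good.step {γ₀ α m : ℝ} (hα : -2 < α) (hγ₀ : 2 ≤ γ₀) {n : ℕ} {s : St}
    (h : Good γ₀ α m n s) (i : Fin 6) : Good γ₀ α m (n+1) (T γ₀ α n i s) := by
  obtain ⟨h1, h2, h3, h4⟩ := h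
  obtain ⟨⟨a1, -⟩, ⟨a2, -⟩, ⟨a3, -⟩, a4⟩ := incr_facts hα i
  have hg := gam_ge hα hγ₀ (n+1)
  have hg0 : affGamma γ₀ α (n+1) ≠ 0 := by linarith
  refine ⟨?_, ?_, ?_, ?_⟩
  · simp only [T]
    rw [← add_div, ← add_div, div_eq_one_iff_eq hg0, gam_succ]
    linear_combination affGamma γ₀ α n * h1 + a4
  all_goals
    simp only [T]
    rw [mul_div_cancel₀ _ hg0]
    linarith

lemma Good.pos {γ₀ α m : ℝ} (hα : -2 < α) (hγ₀ : 2 ≤ γ₀) (hm : 0 < m) {n : ℕ} {s : St}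
    (h : Good γ₀ α m n s) : 0 < s.1 ∧ 0 < s.2.1 ∧ 0 < s.2.2 := by
  obtain ⟨h1, h2, h3, h4⟩ := h
  have hg := gam_ge hα hγ₀ n
  refine ⟨?_, ?_, ?_⟩
  · exact pos_of_mul_pos_right (lt_of_lt_of_le hm h2) (by linarith)
  · exact pos_of_mul_pos_right (lt_of_lt_of_le hm h3) (by linarith)
  · exact pos_of_mul_pos_right (lt_of_lt_of_le hm h4) (by linarith)

lemma pr_sum (s : St) (h : s.1 + s.2.1 + s.2.2 = 1) : ∑ i, pr i s = 1 := by
  simp only [Fin.sum_univ_six, pr, affProb]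
  have : s.2.2 = 1 - s.1 - s.2.1 := by linarith
  rw [this]; ring

lemma pr_nonneg (i : Fin 6) (s : St) (h1 : 0 ≤ s.1) (h2 : 0 ≤ s.2.1) (h3 : 0 ≤ s.2.2) :
    0 ≤ pr i s := by
  fin_cases i <;> simp [pr, affProb] <;> positivity

lemma pr_pos (i : Fin 6) (s : St) (h1 : 0 < s.1) (h2 : 0 < s.2.1) (h3 : 0 < s.2.2) :
    0 < pr i s := by
  fin_cases i <;> simp [pr, affProb] <;> positivity

lemma T_inj {γ₀ α : ℝ} (hα : -2 < α) (hγ₀ : 2 ≤ γ₀) (n : ℕ) (s : St) {i j : Fin 6}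
    (h : T γ₀ α n i s = T γ₀ α n j s) : i = j := by
  have hg := gam_ge hα hγ₀ (n+1)
  have hg0 : affGamma γ₀ α (n+1) ≠ 0 := by linarith
  simp only [T, Prod.mk.injEq, div_left_inj' hg0, add_right_inj] at h
  obtain ⟨h1, h2, h3⟩ := h
  revert h1 h2 h3
  fin_cases i <;> fin_cases j <;> simp [affIncr] <;> intros <;> linarith

lemma measurable_T (γ₀ α : ℝ) (n : ℕ) (i : Fin 6) : Measurable (T γ₀ α n i) := by
  unfold T; fun_prop

lemma measurable_pr (i : Fin 6) : Measurable (pr i) := by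
  unfold pr
  fin_cases i <;> simp only [affProb] <;> fun_prop

variable {Ω : Type*} [MeasurableSpace Ω] {μ : Measure Ω} {α γ₀ : ℝ}

/-- the state process -/
def S (c : AffRPSChain μ α γ₀) (n : ℕ) (ω : Ω) : St := (c.X n ω, c.Y n ω, c.Z n ω)

/-- transition events -/
def E (c : AffRPSChain μ α γ₀) (n : ℕ) (i : Fin 6) : Set Ω :=
  {ω | S c (n+1) ω = T γ₀ α n i (S c n ω)}

lemma meas_S (c : AffRPSChain μ α γ₀) (n : ℕ) : Measurable[c.F n] (S c n) := by
  exact (c.adapted_X n).prodMk ((c.adapted_Y n).prodMk (c.adapted_Z n))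

lemma meas_S_le (c : AffRPSChain μ α γ₀) {n k : ℕ} (h : n ≤ k) : Measurable[c.F k] (S c n) :=
  (meas_S c n).mono (c.F.mono h) le_rfl

lemma meas_S' (c : AffRPSChain μ α γ₀) (n : ℕ) : Measurable (S c n) :=
  (meas_S c n).mono (c.F.le n) le_rfl

lemma meas_E (c : AffRPSChain μ α γ₀) (n : ℕ) (i : Fin 6) : MeasurableSet[c.F (n+1)] (E c n i) := by
  have h1 := meas_S c (n+1)
  have h2 := (measurable_T γ₀ α n i).comp (meas_S_le c (Nat.le_succ n))
  exact measurableSet_eq_fun h1 h2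

lemma meas_E' (c : AffRPSChain μ α γ₀) (n : ℕ) (i : Fin 6) : MeasurableSet (E c n i) :=
  c.F.le _ _ (meas_E c n i)

lemma step' (c : AffRPSChain μ α γ₀) (n : ℕ) (i : Fin 6) :
    μ[(E c n i).indicator (fun _ => (1:ℝ)) | c.F n] =ᵐ[μ] fun ω => pr i (S c n ω) := by
  have := c.step n i
  have hE : E c n i = {ω | c.X (n+1) ω = (affGamma γ₀ α n * c.X n ω + (affIncr α i).1) / affGamma γ₀ α (n+1) ∧
             c.Y (n+1) ω = (affGamma γ₀ α n * c.Y n ω + (affIncr α i).2.1) / affGamma γ₀ α (n+1) ∧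
             c.Z (n+1) ω = (affGamma γ₀ α n * c.Z n ω + (affIncr α i).2.2) / affGamma γ₀ α (n+1)} := by
    ext ω
    simp [E, S, T]
  rw [hE]
  exact this

lemma S_simplex (c : AffRPSChain μ α γ₀) (n : ℕ) (ω : Ω) :
    0 ≤ (S c n ω).1 ∧ 0 ≤ (S c n ω).2.1 ∧ 0 ≤ (S c n ω).2.2 ∧
    (S c n ω).1 + (S c n ω).2.1 + (S c n ω).2.2 = 1 :=
  ⟨c.nonneg_X n ω, c.nonneg_Y n ω, c.nonneg_Z n ω, c.sum_eq_one n ω⟩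

variable [IsProbabilityMeasure μ]

lemma ae_E (hα : -2 < α) (hγ₀ : 2 ≤ γ₀) (c : AffRPSChain μ α γ₀) (n : ℕ) :
    ∀ᵐ ω ∂μ, ∃ i, ω ∈ E c n i := by
  have hint : ∀ i, ∫ ω, (E c n i).indicator (fun _ => (1:ℝ)) ω ∂μ = ∫ ω, pr i (S c n ω) ∂μ := by
    intro i
    rw [← integral_congr_ae (step' c n i), integral_condExp (c.F.le n)]
  have hpi : ∀ i, Integrable (fun ω => pr i (S c n ω)) μ := fun i =>
    integrable_condExp.congr (step' c n i)
  have hsum : ∑ i, μ.real (E c n i) = 1 := by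
    have : ∀ i, μ.real (E c n i) = ∫ ω, pr i (S c n ω) ∂μ := by
      intro i
      rw [← hint i, integral_indicator_const _ (meas_E' c n i)]; simp
    simp_rw [this]
    rw [← integral_finsetSum _ (fun i _ => hpi i)]
    have : ∀ ω, ∑ i, pr i (S c n ω) = 1 := fun ω => pr_sum _ (S_simplex c n ω).2.2.2
    simp [this]
  have hdisj : Pairwise (Function.onFun Disjoint (E c n)) := by
    intro i j hij
    rw [Function.onFun, Set.disjoint_left]
    intro ω hi hj
    exact hij (T_inj hα hγ₀ n (S c n ω) ((Eq.symm hi).trans hj))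
  have hU : μ.real (⋃ i, E c n i) = 1 := by
    rw [measureReal_iUnion_fintype hdisj (fun i => meas_E' c n i), hsum]
  have : μ (⋃ i, E c n i)ᶜ = 0 := by
    rw [prob_compl_eq_zero_iff (MeasurableSet.iUnion fun i => meas_E' c n i)]
    rw [measureReal_def] at hU
    rwa [ENNReal.toReal_eq_one_iff] at hU
  filter_upwards [compl_mem_ae_iff.mpr this] with ω hω
  simpa using hω

lemma key (hα : -2 < α) (hγ₀ : 2 ≤ γ₀) (c : AffRPSChain μ α γ₀) (n : ℕ) (A : Ω → ℝ)
    (cc : Fin 6 → Ω → ℝ) (hm : ∀ i, StronglyMeasurable[c.F n] (cc i)) (K : ℝ)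
    (hK : ∀ i, ∀ᵐ ω ∂μ, |cc i ω| ≤ K) (hA : ∀ᵐ ω ∂μ, ∀ i, ω ∈ E c n i → A ω = cc i ω) :
    Integrable A μ ∧ μ[A | c.F n] =ᵐ[μ] fun ω => ∑ i, pr i (S c n ω) * cc i ω := by
  have hind : ∀ i, Integrable ((E c n i).indicator (fun _ => (1:ℝ))) μ := fun i =>
    (integrable_const (1:ℝ)).indicator (meas_E' c n i)
  have hi : ∀ i, Integrable (cc i * (E c n i).indicator (fun _ => (1:ℝ))) μ := fun i =>
    (hind i).bdd_mul ((hm i).mono (c.F.le n)).aestronglyMeasurable (hK i)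
  have h1 : A =ᵐ[μ] ∑ i, cc i * (E c n i).indicator (fun _ => (1:ℝ)) := by
    filter_upwards [ae_E hα hγ₀ c n, hA] with ω ⟨i, hi⟩ hA
    rw [Finset.sum_apply, Finset.sum_eq_single i]
    · simp [hi, hA i hi]
    · intro j _ hj
      have : ω ∉ E c n j := fun h => hj (T_inj hα hγ₀ n (S c n ω) ((Eq.symm h).trans hi))
      simp [this]
    · simp
  refine ⟨(integrable_finsetSum' _ fun i _ => hi i).congr h1.symm, ?_⟩
  refine (condExp_congr_ae h1).trans ((condExp_finsetSum (fun i _ => hi i) _).trans ?_)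
  have h2 : ∀ i, μ[cc i * (E c n i).indicator (fun _ => (1:ℝ)) | c.F n] =ᵐ[μ]
      fun ω => pr i (S c n ω) * cc i ω := by
    intro i
    refine (condExp_stronglyMeasurable_mul_of_bound (c.F.le n) (hm i) (hind i) K (hK i)).trans ?_
    filter_upwards [step' c n i] with ω hω
    simp only [Pi.mul_apply]
    rw [hω, mul_comm]
  filter_upwards [ae_all_iff.mpr h2] with ω hω
  rw [Finset.sum_apply]
  exact Finset.sum_congr rfl fun i _ => hω i

lemma ae_path (hα : -2 < α) (hγ₀ : 2 ≤ γ₀) (c : AffRPSChain μ α γ₀) :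
    ∀ᵐ ω ∂μ, ∀ n, ∃ i, S c (n+1) ω = T γ₀ α n i (S c n ω) :=
  ae_all_iff.mpr fun n => ae_E hα hγ₀ c n

lemma exists_m (hγ₀ : 2 ≤ γ₀) (c : AffRPSChain μ α γ₀) :
    ∃ m, 0 < m ∧ ∀ ω, Good γ₀ α m 0 (S c 0 ω) := by
  obtain ⟨ω₀⟩ : Nonempty Ω := nonempty_of_isProbabilityMeasure μ
  refine ⟨min (γ₀ * c.X 0 ω₀) (min (γ₀ * c.Y 0 ω₀) (γ₀ * c.Z 0 ω₀)), ?_, fun ω => ?_⟩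
  · have := c.init_X_pos ω₀
    have := c.init_Y_pos ω₀
    have := c.init_Z_pos ω₀
    refine lt_min ?_ (lt_min ?_ ?_) <;> positivity
  · have h : affGamma γ₀ α 0 = γ₀ := by simp [affGamma]
    refine ⟨c.sum_eq_one 0 ω, ?_, ?_, ?_⟩ <;> simp only [S, h]
    · rw [c.init_X_const ω ω₀]; exact min_le_left _ _
    · rw [c.init_Y_const ω ω₀]; exact (min_le_right _ _).trans (min_le_left _ _)
    · rw [c.init_Z_const ω ω₀]; exact (min_le_right _ _).trans (min_le_right _ _)

lemma ae_good (hα : -2 < α) (hγ₀ : 2 ≤ γ₀) (c : AffRPSChain μ α γ₀) {m : ℝ}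
    (hm : ∀ ω, Good γ₀ α m 0 (S c 0 ω)) : ∀ᵐ ω ∂μ, ∀ n, Good γ₀ α m n (S c n ω) := by
  filter_upwards [ae_path hα hγ₀ c] with ω hω n
  induction n with
  | zero => exact hm ω
  | succ n ih =>
    obtain ⟨i, hi⟩ := hω n
    rw [hi]
    exact ih.step hα hγ₀ i

lemma superMG (hα : -2 < α) (hγ₀ : 2 ≤ γ₀) (c : AffRPSChain μ α γ₀) {m : ℝ}
    (hm : ∀ ω, Good γ₀ α m 0 (S c 0 ω)) (f : ℕ → St → ℝ) (hf : ∀ n, Measurable (f n))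
    (hb : ∀ n, ∃ K, ∀ s, Good γ₀ α m n s → |f n s| ≤ K)
    (hs : ∀ n s, Good γ₀ α m n s → ∑ i, pr i s * f (n+1) (T γ₀ α n i s) ≤ f n s) :
    Supermartingale (fun n ω => f n (S c n ω)) c.F μ := by
  have hg := ae_good hα hγ₀ c hm
  refine supermartingale_nat ?_ ?_ ?_
  · intro n
    exact ((hf n).comp (meas_S c n)).stronglyMeasurable
  · intro n
    obtain ⟨K, hK⟩ := hb n
    refine Integrable.of_bound ((hf n).comp (meas_S' c n)).aestronglyMeasurable K ?_
    filter_upwards [hg] with ω hω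
    exact hK _ (hω n)
  · intro n
    obtain ⟨K, hK⟩ := hb (n+1)
    have := (key hα hγ₀ c n (fun ω => f (n+1) (S c (n+1) ω))
      (fun i ω => f (n+1) (T γ₀ α n i (S c n ω)))
      (fun i => (((hf (n+1)).comp (measurable_T γ₀ α n i)).comp (meas_S c n)).stronglyMeasurable)
      K (fun i => by
        filter_upwards [hg] with ω hω
        exact hK _ ((hω n).step hα hγ₀ i))
      (Eventually.of_forall fun ω i hi => by
        have : S c (n+1) ω = T γ₀ α n i (S c n ω) := hi
        simp only [this])).2
    filter_upwards [this, hg] with ω hω hgω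
    rw [hω]
    exact hs n _ (hgω n)

end RPS
namespace RPS

/-- product -/
def Mf (s : St) : ℝ := s.1 * s.2.1 * s.2.2

/-- relative drift of the product -/
def kap (γ₀ α : ℝ) (n : ℕ) : ℝ :=
  ((3 * (4+α)^2 - 6 * (4+α) + 6) * affGamma γ₀ α n + (4+α)^3) / (affGamma γ₀ α (n+1))^3

lemma EM {γ₀ α : ℝ} (hα : -2 < α) (hγ₀ : 2 ≤ γ₀) (n : ℕ) (s : St)
    (h : s.1 + s.2.1 + s.2.2 = 1) :
    ∑ i, pr i s * Mf (T γ₀ α n i s) = Mf s * (1 - kap γ₀ α n) := by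
  have hg := gam_ge hα hγ₀ (n+1)
  have hg0 : affGamma γ₀ α (n+1) ≠ 0 := by linarith
  obtain ⟨x, y, z⟩ := s
  simp only at h
  have hz : z = 1 - x - y := by linarith
  simp only [Fin.sum_univ_six, pr, affProb, Mf, T, affIncr, kap]
  field_simp
  rw [gam_succ, hz]
  ring

lemma kap_bounds {γ₀ α : ℝ} (hα : -2 < α) (hγ₀ : 2 ≤ γ₀) (n : ℕ) :
    12 / (6 + α)^2 / (affGamma γ₀ α n * affGamma γ₀ α (n+1)) ≤ kap γ₀ α n ∧
    kap γ₀ α n ≤ (3 * (4+α)^2 + 6 + (4+α)^3) / (affGamma γ₀ α n * affGamma γ₀ α (n+1)) := by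
  have hg := gam_ge hα hγ₀ n
  unfold kap
  rw [gam_succ]
  set g := affGamma γ₀ α n
  obtain ⟨b, hb⟩ : ∃ b, b = 4 + α := ⟨_, rfl⟩
  have h6 : 6 + α = b + 2 := by linarith
  rw [h6, ← hb]
  have hb2 : 2 < b := by linarith
  constructor
  · rw [div_div, div_le_div_iff₀ (by positivity) (by positivity)]
    have h1 : 3 * g ≤ (3 * b^2 - 6*b + 6) * g + b^3 := by
      have : 0 ≤ b^3 := by positivity
      nlinarith [mul_nonneg (by linarith : (0:ℝ) ≤ g) (sq_nonneg (b-1))]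
    have h2 : 2 * (g + b) ≤ g * (b+2) := by nlinarith
    have h3 : (2 * (g + b))^2 ≤ (g * (b+2))^2 := by gcongr
    calc 12 * (g+b)^3 = 3 * (2*(g+b))^2 * (g+b) := by ring
      _ ≤ 3 * (g * (b+2))^2 * (g+b) := by gcongr
      _ = 3 * g * ((b+2)^2 * (g * (g+b))) := by ring
      _ ≤ _ := by gcongr
  · rw [div_le_div_iff₀ (by positivity) (by positivity)]
    have h1 : (3 * b^2 - 6*b + 6) * g + b^3 ≤ (3 * b^2 + 6 + b^3) * g := by
      have : 0 ≤ b^3 := by positivity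
      nlinarith [mul_nonneg this (by linarith : (0:ℝ) ≤ g - 1)]
    calc _ ≤ (3 * b^2 + 6 + b^3) * g * (g * (g+b)) := by gcongr
      _ = (3 * b^2 + 6 + b^3) * (g * g * (g+b)) := by ring
      _ ≤ (3 * b^2 + 6 + b^3) * ((g+b) * (g+b) * (g+b)) := by gcongr <;> linarith
      _ = _ := by ring

lemma V_le_D (x y z : ℝ) (hx : 0 ≤ x) (hy : 0 ≤ y) (hz : 0 ≤ z) (h : x + y + z = 1) :
    (x - 1/3)^2 + (y - 1/3)^2 + (z - 1/3)^2 ≤ 18 * (1/27 - x * y * z) := by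
  have hz' : z = 1 - x - y := by linarith
  -- equivalent to xy+yz+zx ≥ 9xyz
  have e : 18 * (1/27 - x * y * z) - ((x - 1/3)^2 + (y - 1/3)^2 + (z - 1/3)^2)
      = 2 * (x * (y - z)^2 + y * (z - x)^2 + z * (x - y)^2) := by
    rw [hz']; ring
  have : 0 ≤ x * (y - z)^2 + y * (z - x)^2 + z * (x - y)^2 := by positivity
  linarith

lemma D_le_V (x y z : ℝ) (hx : 0 ≤ x) (hy : 0 ≤ y) (hz : 0 ≤ z) (h : x + y + z = 1) :
    1/27 - x * y * z ≤ (x - 1/3)^2 + (y - 1/3)^2 + (z - 1/3)^2 := by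
  have hz' : z = 1 - x - y := by linarith
  have e : (x - 1/3)^2 + (y - 1/3)^2 + (z - 1/3)^2 - (1/27 - x * y * z)
      = (5/6) * ((x - 1/3)^2 + (y - 1/3)^2 + (z - 1/3)^2) + (x-1/3)*(y-1/3)*(z-1/3) := by
    rw [hz']; ring
  have h1 : |x - 1/3| ≤ 2/3 := by rw [abs_le]; constructor <;> linarith
  have h2 : |(x-1/3)*(y-1/3)*(z-1/3)| ≤ 2/3 * (|y-1/3| * |z-1/3|) := by
    rw [abs_mul, abs_mul, mul_assoc]; gcongr
  have h3 := neg_abs_le ((x-1/3)*(y-1/3)*(z-1/3))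
  have h4 : 2 * (|y-1/3| * |z-1/3|) ≤ (y-1/3)^2 + (z-1/3)^2 := by
    rw [← sq_abs (y-1/3), ← sq_abs (z-1/3)]
    nlinarith [sq_nonneg (|y-1/3| - |z-1/3|)]
  nlinarith [sq_nonneg (x-1/3), sq_nonneg (y-1/3), sq_nonneg (z-1/3)]

lemma Mf_le {s : St} (hx : 0 ≤ s.1) (hy : 0 ≤ s.2.1) (hz : 0 ≤ s.2.2)
    (h : s.1 + s.2.1 + s.2.2 = 1) : Mf s ≤ 1/27 := by
  have := V_le_D _ _ _ hx hy hz h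
  unfold Mf
  nlinarith [sq_nonneg (s.1 - 1/3), sq_nonneg (s.2.1 - 1/3), sq_nonneg (s.2.2 - 1/3)]

lemma disp {γ₀ α : ℝ} (hα : -2 < α) (hγ₀ : 2 ≤ γ₀) (n : ℕ) (s : St)
    (hx : 0 ≤ s.1) (hy : 0 ≤ s.2.1) (hz : 0 ≤ s.2.2) (h : s.1 + s.2.1 + s.2.2 = 1) (i : Fin 6) :
    |(T γ₀ α n i s).1 - s.1| ≤ (4+α) / affGamma γ₀ α (n+1) ∧
    |(T γ₀ α n i s).2.1 - s.2.1| ≤ (4+α) / affGamma γ₀ α (n+1) ∧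
    |(T γ₀ α n i s).2.2 - s.2.2| ≤ (4+α) / affGamma γ₀ α (n+1) := by
  obtain ⟨⟨a1, b1⟩, ⟨a2, b2⟩, ⟨a3, b3⟩, a4⟩ := incr_facts hα i
  have hg := gam_ge hα hγ₀ (n+1)
  have hg0 : 0 < affGamma γ₀ α (n+1) := by linarith
  have key : ∀ x d : ℝ, 0 ≤ x → x ≤ 1 → 0 ≤ d → d ≤ 4 + α →
      |(affGamma γ₀ α n * x + d) / affGamma γ₀ α (n+1) - x| ≤ (4+α) / affGamma γ₀ α (n+1) := by
    intro x d h0 h1 hd hd'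
    have : (affGamma γ₀ α n * x + d) / affGamma γ₀ α (n+1) - x
        = (d - (4+α) * x) / affGamma γ₀ α (n+1) := by
      field_simp
      rw [gam_succ]; ring
    rw [this, abs_div, abs_of_pos hg0]
    gcongr
    rw [abs_le]
    constructor <;> nlinarith
  exact ⟨key _ _ hx (by linarith) a1 b1, key _ _ hy (by linarith) a2 b2,
    key _ _ hz (by linarith) a3 b3⟩

lemma four (p q r w : ℝ) : (p+q+r+w)^2 ≤ 4*(p^2+q^2+r^2+w^2) := by
  have e : 4*(p^2+q^2+r^2+w^2) - (p+q+r+w)^2 = (p-q)^2 + (p-r)^2 + (p-w)^2 + (q-r)^2 + (q-w)^2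
      + (r-w)^2 := by ring
  have : 0 ≤ (p-q)^2 + (p-r)^2 + (p-w)^2 + (q-r)^2 + (q-w)^2 + (r-w)^2 := by positivity
  linarith

lemma dM_alg (x y z a b e t : ℝ) (hx : 0 ≤ x) (hy : 0 ≤ y) (hz : 0 ≤ z) (h : x + y + z = 1)
    (h0 : a + b + e = 0) (ha : |a| ≤ t) (hb : |b| ≤ t) (he : |e| ≤ t) (ht : t ≤ 1) :
    ((x+a)*(y+b)*(z+e) - x*y*z)^2 ≤ 432 * t^2 * (1/27 - x*y*z) + 16 * t^4 := by
  have ht0 : 0 ≤ t := (abs_nonneg a).trans ha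
  have hV := V_le_D x y z hx hy hz h
  obtain ⟨V, hVdef⟩ : ∃ V, V = (x - 1/3)^2 + (y - 1/3)^2 + (z - 1/3)^2 := ⟨_, rfl⟩
  rw [← hVdef] at hV
  have e1 : (x+a)*(y+b)*(z+e) - x*y*z = (y*z-1/9)*a + (x*z-1/9)*b + (x*y-1/9)*e
      + (x*b*e + y*a*e + z*a*b + a*b*e) := by
    linear_combination (1/9) * h0
  have sqa : a^2 ≤ t^2 := sq_le_sq' (by linarith [abs_le.mp ha]) (abs_le.mp ha).2
  have sqb : b^2 ≤ t^2 := sq_le_sq' (by linarith [abs_le.mp hb]) (abs_le.mp hb).2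
  have sqe : e^2 ≤ t^2 := sq_le_sq' (by linarith [abs_le.mp he]) (abs_le.mp he).2
  have lin : ∀ p q : ℝ, 0 ≤ p → p ≤ 1 → 0 ≤ q → q ≤ 1 →
      (p*q - 1/9)^2 ≤ 2 * ((p-1/3)^2 + (q-1/3)^2) := by
    intro p q h1 h2 h3 h4
    have e : p*q - 1/9 = (p-1/3)*q + (q-1/3)/3 := by ring
    have hq : q^2 ≤ 1 := by nlinarith
    rw [e]
    calc ((p-1/3)*q + (q-1/3)/3)^2 ≤ 2 * ((p-1/3)*q)^2 + 2*((q-1/3)/3)^2 := by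
          nlinarith [sq_nonneg ((p-1/3)*q - (q-1/3)/3)]
      _ ≤ _ := by nlinarith [mul_le_mul_of_nonneg_left hq (sq_nonneg (p-1/3)), sq_nonneg (q-1/3)]
  have l1 := lin y z hy (by linarith) hz (by linarith)
  have l2 := lin x z hx (by linarith) hz (by linarith)
  have l3 := lin x y hx (by linarith) hy (by linarith)
  have hV0 : 0 ≤ V := by rw [hVdef]; positivity
  have m1 : ((y*z-1/9)*a)^2 ≤ 2 * V * t^2 := by
    rw [mul_pow]; refine mul_le_mul ?_ sqa (sq_nonneg _) (by positivity)
    linarith [sq_nonneg (x-1/3)]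
  have m2 : ((x*z-1/9)*b)^2 ≤ 2 * V * t^2 := by
    rw [mul_pow]; refine mul_le_mul ?_ sqb (sq_nonneg _) (by positivity)
    linarith [sq_nonneg (y-1/3)]
  have m3 : ((x*y-1/9)*e)^2 ≤ 2 * V * t^2 := by
    rw [mul_pow]; refine mul_le_mul ?_ sqe (sq_nonneg _) (by positivity)
    linarith [sq_nonneg (z-1/3)]
  have m4 : |x*b*e + y*a*e + z*a*b + a*b*e| ≤ 2 * t^2 := by
    have p : ∀ u v : ℝ, |u| ≤ t → |v| ≤ t → |u * v| ≤ t^2 := by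
      intro u v hu hv; rw [abs_mul, sq]; gcongr
    have q1 := p b e hb he
    have q2 := p a e ha he
    have q3 := p a b ha hb
    have q4 : |a*b*e| ≤ t^2 := by
      rw [abs_mul]
      calc |a*b| * |e| ≤ t^2 * 1 := by gcongr; linarith
        _ = _ := by ring
    calc |x*b*e + y*a*e + z*a*b + a*b*e| ≤ |x*b*e| + |y*a*e| + |z*a*b| + |a*b*e| := by
          refine (abs_add_le _ _).trans ?_
          gcongr
          refine (abs_add_le _ _).trans ?_
          gcongr
          exact abs_add_le _ _
      _ = x * |b*e| + y*|a*e| + z*|a*b| + |a*b*e| := by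
          rw [mul_assoc x, mul_assoc y, mul_assoc z, abs_mul x, abs_mul y, abs_mul z,
            abs_of_nonneg hx, abs_of_nonneg hy, abs_of_nonneg hz]
      _ ≤ x * t^2 + y * t^2 + z * t^2 + t^2 := by gcongr
      _ = 2 * t^2 := by linear_combination t^2 * h
  have m4' : (x*b*e + y*a*e + z*a*b + a*b*e)^2 ≤ 4 * t^4 := by
    rw [← sq_abs]
    calc _ ≤ (2*t^2)^2 := by gcongr
      _ = _ := by ring
  rw [e1]
  refine (four _ _ _ _).trans ?_
  have : V * t^2 ≤ 18 * (1/27 - x*y*z) * t^2 := by gcongr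
  linarith

lemma dM_sq {γ₀ α : ℝ} (hα : -2 < α) (hγ₀ : 2 ≤ γ₀) (n : ℕ) (s : St)
    (hx : 0 ≤ s.1) (hy : 0 ≤ s.2.1) (hz : 0 ≤ s.2.2) (h : s.1 + s.2.1 + s.2.2 = 1) (i : Fin 6) :
    (Mf (T γ₀ α n i s) - Mf s)^2 ≤ (432 * (4+α)^2 + 16 * (4+α)^4) *
      ((1/27 - Mf s) / (affGamma γ₀ α n * affGamma γ₀ α (n+1))
        + 1 / (affGamma γ₀ α n * affGamma γ₀ α (n+1))^2) := by
  obtain ⟨d1, d2, d3⟩ := disp hα hγ₀ n s hx hy hz h i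
  have hM : Mf s ≤ 1/27 := Mf_le hx hy hz h
  have hg := gam_ge hα hγ₀ n
  have hs := gam_succ γ₀ α n
  have hsum : (T γ₀ α n i s).1 + (T γ₀ α n i s).2.1 + (T γ₀ α n i s).2.2 = 1 := by
    have hg0 : affGamma γ₀ α (n+1) ≠ 0 := by linarith
    simp only [T]
    rw [← add_div, ← add_div, div_eq_one_iff_eq hg0, gam_succ]
    linear_combination affGamma γ₀ α n * h + (incr_facts hα i).2.2.2
  set t := (4+α) / affGamma γ₀ α (n+1) with htdef
  have ht : t ≤ 1 := by
    rw [htdef, div_le_one (by linarith)]; linarith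
  have := dM_alg s.1 s.2.1 s.2.2 _ _ _ t hx hy hz h (by linarith) d1 d2 d3 ht
  have e : Mf (T γ₀ α n i s) - Mf s = (s.1 + ((T γ₀ α n i s).1 - s.1)) *
    (s.2.1 + ((T γ₀ α n i s).2.1 - s.2.1)) * (s.2.2 + ((T γ₀ α n i s).2.2 - s.2.2))
      - s.1 * s.2.1 * s.2.2 := by
    unfold Mf; ring
  rw [e]
  refine this.trans ?_
  have hMe : s.1 * s.2.1 * s.2.2 = Mf s := rfl
  rw [hMe]
  set g := affGamma γ₀ α n
  set g' := affGamma γ₀ α (n+1)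
  have hr : t^2 ≤ (4+α)^2 * (1 / (g * g')) := by
    rw [htdef, div_pow, div_eq_mul_one_div]
    gcongr
    · have : 0 < g := by linarith
      have : 0 < g' := by linarith
      positivity
    · nlinarith
  set r := 1 / (g * g') with hrdef
  have hr0 : 0 ≤ r := by
    have : 0 < g := by linarith
    have : 0 < g' := by linarith
    positivity
  have h4 : t^4 ≤ (4+α)^4 * r^2 := by
    calc t^4 = (t^2)^2 := by ring
      _ ≤ ((4+α)^2 * r)^2 := by gcongr
      _ = _ := by ring
  have hD0 : 0 ≤ 1/27 - Mf s := by linarith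
  have e2 : (1/27 - Mf s) / (g * g') + 1 / (g*g')^2 = (1/27 - Mf s) * r + r^2 := by
    rw [hrdef]; ring
  rw [e2]
  have h5 : t^2 * (1/27 - Mf s) ≤ (4+α)^2 * r * (1/27 - Mf s) := by gcongr
  have h6 : 0 ≤ (4+α)^4 * (r * (1/27 - Mf s)) := by positivity
  have h7 : 0 ≤ (4+α)^2 * r^2 := by positivity
  nlinarith

lemma log_coord {ι : Type*} [Fintype ι] (p d : ι → ℝ) (x g b θ τ m C : ℝ) (hp : ∀ i, 0 ≤ p i)
    (hp1 : ∑ i, p i = 1) (hd : ∀ i, 0 ≤ d i ∧ d i ≤ b) (hx : 0 < x) (hg : 0 < g) (hb : 2 < b)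
    (hm : 0 < m) (hmx : m ≤ g * x) (hθ : θ = b - 2) (hτ : |τ| ≤ 1)
    (hE : ∑ i, p i * d i = x * (b + θ * τ)) (hC : C = b^2 * (1 + b/m) / 2) :
    ∑ i, p i * (- Real.log ((g * x + d i) / (g + b)) + C / (g * x + d i)) ≤
      - Real.log x + C / (g * x) - θ * τ / g := by
  have hU : 0 < g * x := by positivity
  have hC0 : 0 ≤ C := by rw [hC]; positivity
  set U := g * x with hUdef
  have hone : ∀ i, - Real.log ((U + d i) / (g + b)) + C / (U + d i) ≤
      (- Real.log x + b / g + C / U) - d i * (1 / U - b / (2 * U^2) + C / (U * (U + b))) := by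
    intro i
    obtain ⟨h0, h1⟩ := hd i
    have hlog1 : Real.log ((U + d i)/(g+b)) = Real.log x + Real.log (1 + d i / U)
        - Real.log (1 + b / g) := by
      rw [← Real.log_mul (by positivity) (by positivity), ← Real.log_div (by positivity) (by positivity)]
      congr 1
      rw [hUdef]; field_simp
    have hl2 : Real.log (1 + b/g) ≤ b / g := by
      have := Real.log_le_sub_one_of_pos (x := 1 + b/g) (by positivity)
      linarith
    have hl3 : d i / U - (d i / U)^2 / 2 ≤ Real.log (1 + d i / U) := by
      have hq : 0 ≤ d i / U := by positivity
      refine le_trans ?_ (Real.le_log_one_add_of_nonneg hq)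
      generalize d i / U = q at hq
      rw [le_div_iff₀ (by linarith)]
      nlinarith [pow_nonneg hq 3]
    have hl4 : (d i / U)^2 / 2 ≤ d i * (b / (2 * U^2)) := by
      rw [div_pow]
      have : d i ^2 / U^2 / 2 = d i * (d i / (2 * U^2)) := by field_simp
      rw [this]
      gcongr
    have hl5 : C / (U + d i) ≤ C / U - d i * (C / (U * (U + b))) := by
      have e : C / (U + d i) = C / U - d i * (C / (U * (U + d i))) := by
        have : 0 < U + d i := by linarith
        field_simp; ring
      rw [e]
      gcongr
    rw [hlog1]
    have : d i * (1/U) = d i / U := by ring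
    nlinarith
  calc _ ≤ ∑ i, p i * ((- Real.log x + b / g + C / U) - d i * (1 / U - b / (2 * U^2) + C / (U * (U + b)))) := by
        gcongr with i _
        · exact hp i
        · exact hone i
    _ = (- Real.log x + b / g + C / U) - x * (b + θ * τ) * (1 / U - b / (2 * U^2) + C / (U * (U + b))) := by
        rw [← hE]
        simp_rw [mul_sub]
        rw [Finset.sum_sub_distrib, ← Finset.sum_mul, hp1, one_mul, Finset.sum_mul]
        simp_rw [mul_assoc]
    _ ≤ _ := by
        have h1 : x * (b + θ * τ) * (1/U) = b / g + θ * τ / g := by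
          rw [hUdef]; field_simp
        have hθτ : θ * |τ| ≤ θ := by nlinarith [abs_nonneg τ]
        have h2 : 2 ≤ b + θ * τ := by nlinarith [neg_abs_le τ]
        have h3 : b + θ * τ ≤ 2 * b := by nlinarith [le_abs_self τ]
        have h4 : b / (2 * U^2) * (2 * b) ≤ C / (U * (U + b)) * 2 := by
          have hK : U + b ≤ U * (1 + b / m) := by
            have : b ≤ U * (b / m) := by
              rw [mul_div_assoc', le_div_iff₀ hm]
              nlinarith
            linarith
          have : C / (U * (U * (1 + b/m))) ≤ C / (U * (U+b)) := by gcongr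
          have e : C / (U * (U * (1 + b/m))) = b^2 / (2 * U^2) := by
            rw [hC]; field_simp
          rw [e] at this
          calc _ = b^2 / (2 * U^2) * 2 := by ring
            _ ≤ _ := by gcongr
        have h5 : x * ((b + θ * τ) * (b / (2 * U^2))) ≤ x * ((b + θ * τ) * (C / (U * (U + b)))) := by
          gcongr x * ?_
          calc _ = b / (2 * U^2) * (b + θ * τ) := by ring
            _ ≤ b / (2 * U^2) * (2 * b) := by gcongr
            _ ≤ C / (U * (U + b)) * 2 := h4
            _ ≤ C / (U * (U + b)) * (b + θ * τ) := by gcongr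
            _ = _ := by ring
        nlinarith

end RPS
namespace RPS

variable {Ω : Type*} [mΩ : MeasurableSpace Ω] {μ : Measure Ω} [IsProbabilityMeasure μ] {α γ₀ : ℝ}

lemma conv_nonneg {F : Filtration ℕ mΩ} {f : ℕ → Ω → ℝ} (hf : Supermartingale f F μ)
    (h0 : ∀ n, 0 ≤ᵐ[μ] f n) :
    (∀ᵐ ω ∂μ, ∃ c, Tendsto (fun n => f n ω) atTop (𝓝 c)) := by
  have hsub := hf.neg
  have hb : ∀ n, eLpNorm ((-f) n) 1 μ ≤ (Real.toNNReal (∫ ω, f 0 ω ∂μ) : NNReal) := by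
    intro n
    rw [Pi.neg_apply, eLpNorm_neg, eLpNorm_one_eq_lintegral_enorm,
      ← ofReal_integral_norm_eq_lintegral_enorm (hf.integrable n)]
    rw [ENNReal.ofReal]
    norm_cast
    apply Real.toNNReal_le_toNNReal
    have h1 : ∫ ω, ‖f n ω‖ ∂μ = ∫ ω, f n ω ∂μ := by
      apply integral_congr_ae
      filter_upwards [h0 n] with ω hω
      exact Real.norm_of_nonneg hω
    rw [h1]
    have := hf.setIntegral_le (Nat.zero_le n) (MeasurableSet.univ)
    simpa using this
  filter_upwards [hsub.exists_ae_tendsto_of_bdd hb] with ω ⟨c, hc⟩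
  refine ⟨-c, ?_⟩
  have := hc.neg
  simpa using this

lemma E_incr (α : ℝ) (s : St) (h : s.1 + s.2.1 + s.2.2 = 1) :
    (∑ i, pr i s * (affIncr α i).1 = s.1 * ((4+α) + (2+α) * (s.2.2 - s.2.1))) ∧
    (∑ i, pr i s * (affIncr α i).2.1 = s.2.1 * ((4+α) + (2+α) * (s.1 - s.2.2))) ∧
    (∑ i, pr i s * (affIncr α i).2.2 = s.2.2 * ((4+α) + (2+α) * (s.2.1 - s.1))) := by
  obtain ⟨x, y, z⟩ := s
  simp only at h
  have hz : z = 1 - x - y := by linarith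
  simp only [Fin.sum_univ_six, pr, affProb, affIncr]
  rw [hz]
  refine ⟨?_, ?_, ?_⟩ <;> ring

lemma ae_lower (hα : -2 < α) (hγ₀ : 2 ≤ γ₀) (c : AffRPSChain μ α γ₀) :
    ∀ᵐ ω ∂μ, ∃ δ, 0 < δ ∧ ∀ n, δ ≤ Mf (S c n ω) := by
  obtain ⟨m, hm0, hm⟩ := exists_m hγ₀ c
  obtain ⟨C, hC⟩ : ∃ C, C = (4+α)^2 * (1 + (4+α)/m) / 2 := ⟨_, rfl⟩
  have hb0 : 0 < 4 + α := by linarith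
  have hC0 : 0 ≤ C := by rw [hC]; positivity
  let q : ℕ → ℝ → ℝ := fun n x => - Real.log x + C / (affGamma γ₀ α n * x)
  have hq : ∀ n x, 0 < x → x ≤ 1 → m ≤ affGamma γ₀ α n * x →
      0 ≤ q n x ∧ q n x ≤ - Real.log (m / affGamma γ₀ α n) + C / m ∧ - Real.log x ≤ q n x := by
    intro n x h0 h1 h2
    have hg := gam_ge hα hγ₀ n
    have hg0 : 0 < affGamma γ₀ α n := by linarith
    have hl := Real.log_nonpos h0.le h1
    have hCn : 0 ≤ C / (affGamma γ₀ α n * x) := by positivity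
    refine ⟨?_, ?_, ?_⟩
    · simp only [q]; linarith
    · simp only [q]
      gcongr
      rw [div_le_iff₀ hg0]; linarith
    · simp only [q]; linarith
  let f : ℕ → St → ℝ := fun n s => q n s.1 + q n s.2.1 + q n s.2.2
  have hgood : ∀ n s, Good γ₀ α m n s → (0 < s.1 ∧ s.1 ≤ 1) ∧ (0 < s.2.1 ∧ s.2.1 ≤ 1) ∧
      (0 < s.2.2 ∧ s.2.2 ≤ 1) := by
    intro n s h
    obtain ⟨h1, h2, h3⟩ := h.pos hα hγ₀ hm0
    have := h.1
    refine ⟨⟨h1, ?_⟩, ⟨h2, ?_⟩, ⟨h3, ?_⟩⟩ <;> linarith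
  have hsup : Supermartingale (fun n ω => f n (S c n ω)) c.F μ := by
    apply superMG hα hγ₀ c hm f
    · intro n
      simp only [f, q]
      fun_prop
    · intro n
      refine ⟨3 * (- Real.log (m / affGamma γ₀ α n) + C / m), fun s hs => ?_⟩
      obtain ⟨⟨a1, a2⟩, ⟨b1, b2⟩, ⟨c1, c2⟩⟩ := hgood n s hs
      obtain ⟨p1, p2, -⟩ := hq n _ a1 a2 hs.2.1
      obtain ⟨q1, q2, -⟩ := hq n _ b1 b2 hs.2.2.1
      obtain ⟨r1, r2, -⟩ := hq n _ c1 c2 hs.2.2.2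
      rw [abs_of_nonneg (by simp only [f]; linarith)]
      simp only [f]; linarith
    · intro n s hs
      obtain ⟨⟨a1, a2⟩, ⟨b1, b2⟩, ⟨c1, c2⟩⟩ := hgood n s hs
      have hg := gam_ge hα hγ₀ n
      have hg0 : 0 < affGamma γ₀ α n := by linarith
      obtain ⟨e1, e2, e3⟩ := E_incr α s hs.1
      have hp : ∀ i, 0 ≤ pr i s := fun i => pr_nonneg i s a1.le b1.le c1.le
      have hp1 := pr_sum s hs.1
      have hg1 : affGamma γ₀ α (n+1) ≠ 0 := by rw [gam_succ]; linarith
      have k1 := log_coord (fun i => pr i s) (fun i => (affIncr α i).1) s.1 (affGamma γ₀ α n)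
        (4+α) (2+α) (s.2.2 - s.2.1) m C hp hp1 (fun i => (incr_facts hα i).1) a1 hg0
        (by linarith) hm0 hs.2.1 (by ring) (by rw [abs_le]; constructor <;> linarith) e1 hC
      have k2 := log_coord (fun i => pr i s) (fun i => (affIncr α i).2.1) s.2.1 (affGamma γ₀ α n)
        (4+α) (2+α) (s.1 - s.2.2) m C hp hp1 (fun i => (incr_facts hα i).2.1) b1 hg0
        (by linarith) hm0 hs.2.2.1 (by ring) (by rw [abs_le]; constructor <;> linarith) e2 hC
      have k3 := log_coord (fun i => pr i s) (fun i => (affIncr α i).2.2) s.2.2 (affGamma γ₀ α n)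
        (4+α) (2+α) (s.2.1 - s.1) m C hp hp1 (fun i => (incr_facts hα i).2.2.1) c1 hg0
        (by linarith) hm0 hs.2.2.2 (by ring) (by rw [abs_le]; constructor <;> linarith) e3 hC
      have e : ∑ i, pr i s * f (n+1) (T γ₀ α n i s) =
          ∑ i, pr i s * (- Real.log ((affGamma γ₀ α n * s.1 + (affIncr α i).1) / (affGamma γ₀ α n + (4+α)))
            + C / (affGamma γ₀ α n * s.1 + (affIncr α i).1)) +
          ∑ i, pr i s * (- Real.log ((affGamma γ₀ α n * s.2.1 + (affIncr α i).2.1) / (affGamma γ₀ α n + (4+α)))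
            + C / (affGamma γ₀ α n * s.2.1 + (affIncr α i).2.1)) +
          ∑ i, pr i s * (- Real.log ((affGamma γ₀ α n * s.2.2 + (affIncr α i).2.2) / (affGamma γ₀ α n + (4+α)))
            + C / (affGamma γ₀ α n * s.2.2 + (affIncr α i).2.2)) := by
        rw [← Finset.sum_add_distrib, ← Finset.sum_add_distrib]
        refine Finset.sum_congr rfl fun i _ => ?_
        simp only [f, q, T]
        rw [mul_div_cancel₀ _ hg1, mul_div_cancel₀ _ hg1, mul_div_cancel₀ _ hg1, gam_succ]
        ring
      rw [e]
      refine (add_le_add (add_le_add k1 k2) k3).trans (le_of_eq ?_)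
      simp only [f, q]
      ring
  have hg := ae_good hα hγ₀ c hm
  have hc := conv_nonneg hsup (fun n => by
    filter_upwards [hg] with ω hω
    obtain ⟨⟨a1, a2⟩, ⟨b1, b2⟩, ⟨c1, c2⟩⟩ := hgood n _ (hω n)
    have p1 := (hq n _ a1 a2 (hω n).2.1).1
    have p2 := (hq n _ b1 b2 (hω n).2.2.1).1
    have p3 := (hq n _ c1 c2 (hω n).2.2.2).1
    simp only [f, Pi.zero_apply]
    linarith)
  filter_upwards [hc, hg] with ω ⟨L, hL⟩ hω
  obtain ⟨B, hB⟩ := hL.bddAbove_range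
  refine ⟨Real.exp (-B), Real.exp_pos _, fun n => ?_⟩
  obtain ⟨⟨a1, a2⟩, ⟨b1, b2⟩, ⟨c1, c2⟩⟩ := hgood n _ (hω n)
  have p1 := (hq n _ a1 a2 (hω n).2.1).2.2
  have p2 := (hq n _ b1 b2 (hω n).2.2.1).2.2
  have p3 := (hq n _ c1 c2 (hω n).2.2.2).2.2
  have hBn : f n (S c n ω) ≤ B := hB ⟨n, rfl⟩
  have hMp : 0 < Mf (S c n ω) := by unfold Mf; positivity
  rw [← Real.le_log_iff_exp_le hMp]
  unfold Mf
  rw [Real.log_mul (by positivity) (by positivity), Real.log_mul (by positivity) (by positivity)]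
  simp only [f] at hBn
  linarith

lemma Mf_nonneg (c : AffRPSChain μ α γ₀) (n : ℕ) (ω : Ω) : 0 ≤ Mf (S c n ω) := by
  obtain ⟨h1, h2, h3, h4⟩ := S_simplex c n ω
  unfold Mf; positivity

lemma Mf_le' (c : AffRPSChain μ α γ₀) (n : ℕ) (ω : Ω) : Mf (S c n ω) ≤ 1/27 := by
  obtain ⟨h1, h2, h3, h4⟩ := S_simplex c n ω
  exact Mf_le h1 h2 h3 h4

lemma good_M (hα : -2 < α) (hγ₀ : 2 ≤ γ₀) {m : ℝ} (hm0 : 0 < m) {n : ℕ} {s : St}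
    (h : Good γ₀ α m n s) : 0 ≤ Mf s ∧ Mf s ≤ 1/27 := by
  obtain ⟨h1, h2, h3⟩ := h.pos hα hγ₀ hm0
  refine ⟨?_, Mf_le h1.le h2.le h3.le h.1⟩
  unfold Mf; positivity

lemma measurable_Mf : Measurable Mf := by unfold Mf; fun_prop

lemma sup_M1 (hα : -2 < α) (hγ₀ : 2 ≤ γ₀) (c : AffRPSChain μ α γ₀) (e : ℝ) (he0 : 0 ≤ e)
    (he : e ≤ 9 / ((4+α) * (6+α)^2)) :
    Supermartingale (fun n ω => Mf (S c n ω) * (1 - e / affGamma γ₀ α n)) c.F μ := by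
  obtain ⟨m, hm0, hm⟩ := exists_m hγ₀ c
  have hb0 : 2 < 4 + α := by linarith
  have hb6 : 4 < 6 + α := by linarith
  have he1 : e ≤ 1 := by
    refine he.trans ?_
    rw [div_le_one (by positivity)]
    nlinarith [mul_pos (by linarith : (0:ℝ) < 4 + α) (by positivity : (0:ℝ) < (6+α)^2)]
  apply superMG hα hγ₀ c hm (fun n s => Mf s * (1 - e / affGamma γ₀ α n))
  · intro n
    exact measurable_Mf.mul_const _
  · intro n
    have hg := gam_ge hα hγ₀ n
    refine ⟨1, fun s hs => ?_⟩
    obtain ⟨h1, h2⟩ := good_M hα hγ₀ hm0 hs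
    have h3 : 0 ≤ e / affGamma γ₀ α n := by positivity
    have h4 : e / affGamma γ₀ α n ≤ 1 := by rw [div_le_one (by linarith)]; linarith
    rw [abs_le]; constructor <;> nlinarith
  · intro n s hs
    obtain ⟨h1, h2⟩ := good_M hα hγ₀ hm0 hs
    have hg := gam_ge hα hγ₀ n
    have hk := (kap_bounds hα hγ₀ n).1
    have := EM hα hγ₀ n s hs.1
    simp_rw [← mul_assoc]
    rw [← Finset.sum_mul, this, mul_assoc]
    gcongr
    have hgs := gam_succ γ₀ α n
    set g := affGamma γ₀ α n
    set g' := affGamma γ₀ α (n+1)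
    have hg' : 4 ≤ g' := by linarith
    have e1 : e / g - e / g' = e * (4+α) / (g * g') := by
      have : g' ≠ 0 := by linarith
      have : g ≠ 0 := by linarith
      field_simp; rw [hgs]; ring
    have e2 : e / g' ≤ 1/4 := by
      rw [div_le_div_iff₀ (by linarith) (by linarith)]; linarith
    have hk0 : 0 ≤ kap γ₀ α n := le_trans (by positivity) hk
    have e3 : e * (4+α) / (g * g') ≤ kap γ₀ α n * (3/4) := by
      calc e * (4+α) / (g * g') ≤ (9 / ((4+α) * (6+α)^2)) * (4+α) / (g * g') := by gcongr
        _ = 12 / (6 + α)^2 / (g * g') * (3/4) := by field_simp; ring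
        _ ≤ _ := by gcongr
    nlinarith

set_option maxHeartbeats 1000000 in
lemma sup_Q (hα : -2 < α) (hγ₀ : 2 ≤ γ₀) (c : AffRPSChain μ α γ₀) :
    ∃ C1 C2 : ℝ, 0 ≤ C1 ∧ 0 ≤ C2 ∧
    Supermartingale (fun n ω => (1/27 - Mf (S c n ω))^2 + C1 * (1/27 - Mf (S c n ω)) / affGamma γ₀ α n
      + C2 / (affGamma γ₀ α n)^2) c.F μ := by
  obtain ⟨m, hm0, hm⟩ := exists_m hγ₀ c
  have hb0 : 2 < 4 + α := by linarith
  obtain ⟨b, hb⟩ : ∃ b, b = 4 + α := ⟨_, rfl⟩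
  rw [← hb] at hb0
  obtain ⟨K, hK⟩ : ∃ K, K = 3 * b^2 + 6 + b^3 := ⟨_, rfl⟩
  obtain ⟨B, hB⟩ : ∃ B, B = 432 * b^2 + 16 * b^4 := ⟨_, rfl⟩
  obtain ⟨C1, hC1⟩ : ∃ C1, C1 = (2 * K + B) / b := ⟨_, rfl⟩
  obtain ⟨C2, hC2⟩ : ∃ C2, C2 = (B + C1 * K) / b := ⟨_, rfl⟩
  have hK0 : 0 ≤ K := by rw [hK]; positivity
  have hB0 : 0 ≤ B := by rw [hB]; positivity
  have hC10 : 0 ≤ C1 := by rw [hC1]; positivity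
  have hC20 : 0 ≤ C2 := by rw [hC2]; positivity
  refine ⟨C1, C2, hC10, hC20, ?_⟩
  apply superMG hα hγ₀ c hm (fun n s => (1/27 - Mf s)^2 + C1 * (1/27 - Mf s) / affGamma γ₀ α n
      + C2 / (affGamma γ₀ α n)^2)
  · intro n
    have := measurable_Mf
    fun_prop
  · intro n
    have hg := gam_ge hα hγ₀ n
    refine ⟨1 + C1 / affGamma γ₀ α n + C2 / (affGamma γ₀ α n)^2, fun s hs => ?_⟩
    obtain ⟨h1, h2⟩ := good_M hα hγ₀ hm0 hs
    have h3 : 0 ≤ 1/27 - Mf s := by linarith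
    rw [abs_of_nonneg (by positivity)]
    have h4 : (1/27 - Mf s)^2 ≤ 1 := by nlinarith
    have h5 : C1 * (1/27 - Mf s) ≤ C1 := by nlinarith
    gcongr
  · intro n s hs
    obtain ⟨h1, h2⟩ := good_M hα hγ₀ hm0 hs
    obtain ⟨a1, a2, a3⟩ := hs.pos hα hγ₀ hm0
    have hg := gam_ge hα hγ₀ n
    have hgs := gam_succ γ₀ α n
    have hk := (kap_bounds hα hγ₀ n).2
    have hk0 : 0 ≤ kap γ₀ α n := le_trans (by
      have := gam_ge hα hγ₀ (n+1); positivity) (kap_bounds hα hγ₀ n).1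
    have hEM := EM hα hγ₀ n s hs.1
    have hp1 := pr_sum s hs.1
    have hp : ∀ i, 0 ≤ pr i s := fun i => pr_nonneg i s a1.le a2.le a3.le
    have hdM := fun i => dM_sq hα hγ₀ n s a1.le a2.le a3.le hs.1 i
    simp only [← hb] at hk hdM hgs
    rw [← hK] at hk
    rw [← hB] at hdM
    set g := affGamma γ₀ α n
    set g' := affGamma γ₀ α (n+1)
    set κ := kap γ₀ α n
    set M := Mf s
    have e1 : ∑ i, pr i s * ((1/27 - Mf (T γ₀ α n i s))^2 + C1 * (1/27 - Mf (T γ₀ α n i s)) / g'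
        + C2 / g'^2) = (1/27 - M)^2 + 2 * (1/27 - M) * (κ * M)
          + ∑ i, pr i s * (Mf (T γ₀ α n i s) - M)^2 + C1 * (1/27 - M + κ * M) / g' + C2 / g'^2 := by
      have : ∀ i, pr i s * ((1/27 - Mf (T γ₀ α n i s))^2 + C1 * (1/27 - Mf (T γ₀ α n i s)) / g'
        + C2 / g'^2) = pr i s * (Mf (T γ₀ α n i s) - M)^2
          + (pr i s * Mf (T γ₀ α n i s)) * (-2 * (1/27 - M) - C1 / g')
          + pr i s * ((1/27 - M)^2 + 2 * (1/27-M)*M + C1 * (1/27) / g' + C2/g'^2) := by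
        intro i; ring
      simp_rw [this]
      rw [Finset.sum_add_distrib, Finset.sum_add_distrib, ← Finset.sum_mul, ← Finset.sum_mul, hEM, hp1]
      ring
    rw [e1]
    have e2 : ∑ i, pr i s * (Mf (T γ₀ α n i s) - M)^2 ≤ B * ((1/27 - M) / (g * g') + 1 / (g*g')^2) := by
      calc _ ≤ ∑ i, pr i s * (B * ((1/27 - M) / (g * g') + 1 / (g*g')^2)) := by
            gcongr with i _
            · exact hp i
            · exact hdM i
        _ = _ := by rw [← Finset.sum_mul, hp1, one_mul]
    have hg0 : 0 < g := by linarith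
    have hg'0 : 0 < g' := by linarith
    obtain ⟨r, hr⟩ : ∃ r, r = 1 / (g * g') := ⟨_, rfl⟩
    have hr0 : 0 ≤ r := by rw [hr]; positivity
    have hk' : κ ≤ K * r := by rw [hr]; rw [mul_one_div]; exact hk
    obtain ⟨D, hD⟩ : ∃ D, D = 1/27 - M := ⟨_, rfl⟩
    have hD0 : 0 ≤ D := by rw [hD]; linarith
    have e3 : B * ((1/27 - M) / (g * g') + 1 / (g*g')^2) = B * D * r + B * r^2 := by
      rw [hr, hD]; ring
    rw [e3] at e2
    rw [← hD]
    have hkM : κ * M ≤ K * r := by nlinarith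
    have e4 : C1 * D / g = C1 * D / g' + C1 * D * (b * r) := by
      rw [hr]; field_simp; rw [hgs]
    have e5 : C2 / g'^2 + C2 * b * r * (1/g') ≤ C2 / g^2 := by
      have : C2 / g^2 = C2 / g'^2 + C2 * b * r * (1/g + 1/g') := by
        rw [hr]; field_simp; rw [hgs]; ring
      rw [this]
      have : 0 ≤ C2 * b * r * (1/g) := by positivity
      nlinarith
    have e6 : r^2 ≤ r * (1/g') := by
      rw [sq]
      gcongr
      rw [hr]
      apply one_div_le_one_div_of_le hg'0
      nlinarith
    have hC1b : C1 * b = 2 * K + B := by rw [hC1]; field_simp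
    have hC2b : C2 * b = B + C1 * K := by rw [hC2]; field_simp
    have e7 : C1 * (D + κ * M) / g' ≤ C1 * D / g' + C1 * K * (r * (1/g')) := by
      have : C1 * (D + κ * M) / g' = C1 * D / g' + C1 * (κ * M) * (1/g') := by ring
      rw [this]
      have : C1 * (κ * M) * (1/g') ≤ C1 * (K * r) * (1/g') := by gcongr
      linarith
    have e8 : 2 * D * (κ * M) ≤ 2 * D * (K * r) := by gcongr
    have e9 : C1 * D * (b * r) = (2 * K + B) * D * r := by rw [← hC1b]; ring
    have e10 : C2 * b * r * (1/g') = (B + C1 * K) * (r * (1/g')) := by rw [hC2b]; ring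
    have e11 : B * r^2 ≤ B * (r * (1/g')) := by gcongr
    linarith

end RPS
namespace RPS

variable {Ω : Type*} [mΩ : MeasurableSpace Ω] {μ : Measure Ω} [IsProbabilityMeasure μ] {α γ₀ : ℝ}

lemma sup_lim {F : Filtration ℕ mΩ} {f : ℕ → Ω → ℝ} (hf : Supermartingale f F μ) (C : ℝ)
    (hb : ∀ k, ∀ᵐ ω ∂μ, |f k ω| ≤ C) (g : Ω → ℝ) (hg : Integrable g μ)
    (hl : ∀ᵐ ω ∂μ, Tendsto (fun k => f k ω) atTop (𝓝 (g ω))) (n : ℕ) :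
    μ[g | F n] ≤ᵐ[μ] f n := by
  have hfm : StronglyMeasurable[F n] (f n) := hf.1 n
  apply ae_of_ae_trim (F.le n)
  refine ae_le_of_forall_setIntegral_le (integrable_condExp.trim (F.le n) stronglyMeasurable_condExp)
    ((hf.integrable n).trim (F.le n) hfm) ?_
  intro A hA _
  rw [← setIntegral_trim (F.le n) stronglyMeasurable_condExp hA, ← setIntegral_trim (F.le n) hfm hA,
    setIntegral_condExp (F.le n) hg hA]
  have ht : Tendsto (fun k => ∫ ω in A, f k ω ∂μ) atTop (𝓝 (∫ ω in A, g ω ∂μ)) := by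
    refine tendsto_integral_of_dominated_convergence (fun _ => C)
      (fun k => (hf.integrable k).aestronglyMeasurable.restrict) (integrable_const C)
      (fun k => ae_restrict_of_ae (hb k)) (ae_restrict_of_ae hl)
  refine le_of_tendsto ht ?_
  filter_upwards [eventually_ge_atTop n] with k hk
  exact hf.setIntegral_le hk hA

lemma gam_tendsto (hα : -2 < α) : Tendsto (fun n => affGamma γ₀ α n) atTop atTop := by
  unfold affGamma
  apply tendsto_atTop_add_const_left
  exact tendsto_natCast_atTop_atTop.const_mul_atTop (by linarith)

lemma exists_lim (hα : -2 < α) (hγ₀ : 2 ≤ γ₀) (c : AffRPSChain μ α γ₀) :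
    ∃ L : Ω → ℝ, StronglyMeasurable[⨆ n, c.F n] L ∧
      (∀ᵐ ω ∂μ, Tendsto (fun n => Mf (S c n ω)) atTop (𝓝 (L ω)) ∧ 0 < L ω ∧ L ω ≤ 1/27) := by
  have h0 := sup_M1 hα hγ₀ c 0 le_rfl (by
    have : 0 < 4 + α := by linarith
    have : 0 < 6 + α := by linarith
    positivity)
  have h1 := h0.neg
  have hb : ∀ n, eLpNorm ((-(fun n ω => Mf (S c n ω) * (1 - 0 / affGamma γ₀ α n))) n) 1 μ ≤ (1 : NNReal) := by
    intro n
    rw [Pi.neg_apply, eLpNorm_neg]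
    refine (eLpNorm_le_of_ae_bound (C := 1) (Eventually.of_forall fun ω => ?_)).trans ?_
    · have a := Mf_nonneg c n ω
      have b := Mf_le' c n ω
      simp only [zero_div, sub_zero, mul_one]
      rw [Real.norm_of_nonneg a]; linarith
    · simp
  have h2 := Submartingale.ae_tendsto_limitProcess h1 hb
  refine ⟨fun ω => - (Filtration.limitProcess (-(fun n ω => Mf (S c n ω) * (1 - 0 / affGamma γ₀ α n))) c.F μ ω),
    Filtration.stronglyMeasurable_limitProcess.neg, ?_⟩
  filter_upwards [h2, ae_lower hα hγ₀ c] with ω hω ⟨δ, hδ, hl⟩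
  have h3 := hω.neg
  simp only [Pi.neg_apply, zero_div, sub_zero, mul_one, neg_neg] at h3
  simp only [zero_div, sub_zero, mul_one]
  exact ⟨h3, lt_of_lt_of_le hδ (ge_of_tendsto' h3 hl), le_of_tendsto' h3 fun n => Mf_le' c n ω⟩

lemma bounds_lim (hα : -2 < α) (hγ₀ : 2 ≤ γ₀) (c : AffRPSChain μ α γ₀) (L : Ω → ℝ)
    (hLm : StronglyMeasurable[⨆ n, c.F n] L)
    (hL : ∀ᵐ ω ∂μ, Tendsto (fun n => Mf (S c n ω)) atTop (𝓝 (L ω)) ∧ 0 < L ω ∧ L ω ≤ 1/27) :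
    ∃ e C : ℝ, 0 < e ∧ 0 < C ∧ Integrable L μ ∧ Integrable (fun ω => (1/27 - L ω)^2) μ ∧ ∀ n,
      (∀ᵐ ω ∂μ, (1/27 - Mf (S c n ω)) + e * Mf (S c n ω) / affGamma γ₀ α n ≤ μ[fun ω => 1/27 - L ω | c.F n] ω ∧
        μ[fun ω => (1/27 - L ω)^2 | c.F n] ω ≤ (1/27 - Mf (S c n ω))^2 +
          C * (1/27 - Mf (S c n ω)) / affGamma γ₀ α n + C / (affGamma γ₀ α n)^2) := by
  have h4 : 0 < 4 + α := by linarith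
  have h6 : 0 < 6 + α := by linarith
  have hLm' : StronglyMeasurable L := hLm.mono (iSup_le fun n => c.F.le n)
  have hLi : Integrable L μ := by
    refine Integrable.of_bound hLm'.aestronglyMeasurable 1 ?_
    filter_upwards [hL] with ω ⟨_, h1, h2⟩
    rw [Real.norm_of_nonneg h1.le]; linarith
  have hLi2 : Integrable (fun ω => (1/27 - L ω)^2) μ := by
    refine Integrable.of_bound ((stronglyMeasurable_const.sub hLm').pow 2).aestronglyMeasurable 1 ?_
    filter_upwards [hL] with ω ⟨_, h1, h2⟩
    rw [Real.norm_of_nonneg (by positivity)]; nlinarith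
  obtain ⟨e, he⟩ : ∃ e, e = 9/((4+α)*(6+α)^2) := ⟨_, rfl⟩
  have he0 : 0 < e := by rw [he]; positivity
  have hM := sup_M1 hα hγ₀ c e he0.le (by rw [he])
  obtain ⟨C1, C2, hC1, hC2, hQ⟩ := sup_Q hα hγ₀ c
  have hgt := gam_tendsto (γ₀ := γ₀) hα
  have hginv : Tendsto (fun n => (affGamma γ₀ α n)⁻¹) atTop (𝓝 0) := hgt.inv_tendsto_atTop
  have A1 := fun n => sup_lim hM (1 + e) (fun k => Eventually.of_forall fun ω => by
      have a := Mf_nonneg c k ω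
      have b := Mf_le' c k ω
      have hg := gam_ge hα hγ₀ k
      have h1 : 0 ≤ e / affGamma γ₀ α k := by positivity
      have h2 : e / affGamma γ₀ α k ≤ e := div_le_self he0.le (by linarith)
      rw [abs_mul, abs_of_nonneg a]
      have : |1 - e / affGamma γ₀ α k| ≤ 1 + e := by rw [abs_le]; constructor <;> linarith
      have := abs_nonneg (1 - e / affGamma γ₀ α k)
      nlinarith) L hLi (by
      filter_upwards [hL] with ω ⟨h1, _⟩
      have := h1.mul ((tendsto_const_nhds (x := (1:ℝ))).sub (hginv.const_mul e))
      simpa [div_eq_mul_inv] using this) n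
  have A2 := fun n => sup_lim hQ (1 + C1 + C2) (fun k => Eventually.of_forall fun ω => by
      have a := Mf_nonneg c k ω
      have b := Mf_le' c k ω
      have hg := gam_ge hα hγ₀ k
      have h3 : 0 ≤ 1/27 - Mf (S c k ω) := by linarith
      have hg0 : 0 < affGamma γ₀ α k := by linarith
      rw [abs_of_nonneg (by positivity)]
      have h1 : C1 * (1/27 - Mf (S c k ω)) / affGamma γ₀ α k ≤ C1 := by
        rw [div_le_iff₀ hg0]; nlinarith
      have h2 : C2 / affGamma γ₀ α k ^ 2 ≤ C2 := div_le_self hC2 (by nlinarith)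
      nlinarith) _ hLi2 (by
      filter_upwards [hL] with ω ⟨h1, _⟩
      have h5 := (tendsto_const_nhds (x := (1/27:ℝ))).sub h1
      have := ((h5.pow 2).add ((h5.const_mul C1).mul hginv)).add ((hginv.pow 2).const_mul C2)
      simp only [mul_zero, ne_eq, OfNat.ofNat_ne_zero, not_false_eq_true, zero_pow, add_zero] at this
      refine this.congr fun n => ?_
      simp only [div_eq_mul_inv, inv_pow]) n
  refine ⟨e, C1 + C2 + 1, he0, by positivity, hLi, hLi2, fun n => ?_⟩
  have A3 : μ[fun ω => 1/27 - L ω | c.F n] =ᵐ[μ] fun ω => 1/27 - μ[L | c.F n] ω := by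
    have := condExp_sub (m := c.F n) (integrable_const (μ := μ) (1/27:ℝ)) hLi
    rw [condExp_const (c.F.le n)] at this
    exact this
  filter_upwards [A1 n, A2 n, A3] with ω b1 b2 b3
  have a := Mf_nonneg c n ω
  have b := Mf_le' c n ω
  have hg := gam_ge hα hγ₀ n
  have hg0 : 0 < affGamma γ₀ α n := by linarith
  have h3 : 0 ≤ 1/27 - Mf (S c n ω) := by linarith
  constructor
  · rw [b3]
    have : Mf (S c n ω) * (1 - e / affGamma γ₀ α n) = Mf (S c n ω) - e * Mf (S c n ω) / affGamma γ₀ α n := by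
      ring
    linarith
  · refine b2.trans ?_
    gcongr <;> linarith

end RPS
namespace RPS

variable {Ω : Type*} [mΩ : MeasurableSpace Ω] {μ : Measure Ω} [IsProbabilityMeasure μ] {α γ₀ : ℝ}

lemma L_lt (hα : -2 < α) (hγ₀ : 2 ≤ γ₀) (c : AffRPSChain μ α γ₀) (L : Ω → ℝ)
    (hLm : StronglyMeasurable[⨆ n, c.F n] L)
    (hL : ∀ᵐ ω ∂μ, Tendsto (fun n => Mf (S c n ω)) atTop (𝓝 (L ω)) ∧ 0 < L ω ∧ L ω ≤ 1/27) :
    ∀ᵐ ω ∂μ, L ω < 1/27 := by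
  obtain ⟨e, C, he, hC, hLi, hLi2, hbd⟩ := bounds_lim hα hγ₀ c L hLm hL
  have hLm' : StronglyMeasurable L := hLm.mono (iSup_le fun n => c.F.le n)
  obtain ⟨c', hc'⟩ : ∃ c', c' = min (e/54) 1 := ⟨_, rfl⟩
  have hc0 : 0 < c' := by rw [hc']; positivity
  have hc1 : c' ≤ e/54 := by rw [hc']; exact min_le_left _ _
  have hc2 : c' ≤ 1 := by rw [hc']; exact min_le_right _ _
  obtain ⟨t, ht⟩ : ∃ t, t = c' / (1 + C) := ⟨_, rfl⟩
  have ht0 : 0 < t := by rw [ht]; positivity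
  set G : Ω → ℝ := {ω | L ω < 1/27}.indicator (fun _ => (1:ℝ)) with hG
  have hGset : MeasurableSet[⨆ n, c.F n] {ω | L ω < 1/27} := hLm.measurableSet_lt stronglyMeasurable_const
  have hGm : StronglyMeasurable[⨆ n, c.F n] G := stronglyMeasurable_const.indicator hGset
  have hGi : Integrable G μ := (integrable_const (1:ℝ)).indicator ((iSup_le fun n => c.F.le n) _ hGset)
  have hDi : Integrable (fun ω => 1/27 - L ω) μ := (integrable_const _).sub hLi
  have main : ∀ n, ∀ᵐ ω ∂μ, 1/54 ≤ Mf (S c n ω) → c' * t ≤ μ[G | c.F n] ω := by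
    intro n
    have hg := gam_ge hα hγ₀ n
    set g := affGamma γ₀ α n
    have hg0 : 0 < g := by linarith
    set lam : Ω → ℝ := fun ω => t / ((1/27 - Mf (S c n ω)) + 1/g) with hlam
    have hDn : ∀ ω, 0 ≤ 1/27 - Mf (S c n ω) := fun ω => by have := Mf_le' c n ω; linarith
    have hDt : ∀ ω, 0 < (1/27 - Mf (S c n ω)) + 1/g := fun ω => by
      have := hDn ω; positivity
    have hlm : Measurable[c.F n] lam := by
      have h1 : Measurable[c.F n] (fun ω => Mf (S c n ω)) := measurable_Mf.comp (meas_S c n)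
      exact measurable_const.div ((measurable_const.sub h1).add measurable_const)
    have hlsm : StronglyMeasurable[c.F n] lam := hlm.stronglyMeasurable
    have hl0 : ∀ ω, 0 ≤ lam ω := fun ω => div_nonneg ht0.le (hDt ω).le
    have hlb : ∀ ω, lam ω ≤ t * g := fun ω => by
      have : lam ω ≤ t / (1/g) := by
        apply div_le_div_of_nonneg_left ht0.le (by positivity)
        have := hDn ω; linarith
      simpa using this
    have hi1 : Integrable (lam * fun ω => 1/27 - L ω) μ :=
      hDi.bdd_mul (hlsm.mono (c.F.le n)).aestronglyMeasurable (c := t * g) (Eventually.of_forall fun ω => by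
        rw [Real.norm_of_nonneg (hl0 ω)]; exact hlb ω)
    have hl2 : StronglyMeasurable[c.F n] (lam ^ 2) := hlsm.pow 2
    have hi2 : Integrable (lam^2 * fun ω => (1/27 - L ω)^2) μ :=
      hLi2.bdd_mul (hl2.mono (c.F.le n)).aestronglyMeasurable (c := (t * g)^2) (Eventually.of_forall fun ω => by
        rw [Pi.pow_apply, norm_pow, Real.norm_of_nonneg (hl0 ω)]
        have := hl0 ω; have := hlb ω; gcongr)
    have k1 := condExp_mul_of_stronglyMeasurable_left hlsm hi1 hDi
    have k2 := condExp_mul_of_stronglyMeasurable_left hl2 hi2 hLi2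
    have k3 : μ[(2:ℝ) • (lam * fun ω => 1/27 - L ω) - (lam^2 * fun ω => (1/27 - L ω)^2) | c.F n] ≤ᵐ[μ] μ[G | c.F n] := by
      apply condExp_mono ((hi1.smul (2:ℝ)).sub hi2) hGi
      filter_upwards [hL] with ω ⟨_, _, h3⟩
      simp only [Pi.sub_apply, Pi.smul_apply, Pi.mul_apply, Pi.pow_apply, smul_eq_mul, hG]
      rcases eq_or_lt_of_le h3 with h | h
      · simp [h]
      · rw [indicator_of_mem (show ω ∈ {ω | L ω < 1/27} from h)]
        nlinarith [sq_nonneg (1 - lam ω * (1/27 - L ω))]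
    have k4 := condExp_sub (m := c.F n) (hi1.smul (2:ℝ)) hi2
    have k5 := condExp_smul (m := c.F n) (μ := μ) (2:ℝ) (lam * fun ω => 1/27 - L ω)
    filter_upwards [hbd n, k1, k2, k3, k4, k5] with ω ⟨b1, b2⟩ k1 k2 k3 k4 k5 hM
    refine le_trans ?_ k3
    rw [k4, Pi.sub_apply, k5, Pi.smul_apply, k1, k2, Pi.mul_apply, Pi.mul_apply, Pi.pow_apply, smul_eq_mul]
    set P := μ[fun ω => 1/27 - L ω | c.F n] ω
    set R := μ[fun ω => (1/27 - L ω)^2 | c.F n] ω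
    have hd := hDn ω
    have hdt := hDt ω
    have hll : lam ω * ((1/27 - Mf (S c n ω)) + 1/g) = t := div_mul_cancel₀ _ hdt.ne'
    have hlo := hl0 ω
    set l := lam ω
    set d := 1/27 - Mf (S c n ω)
    obtain ⟨q, hq⟩ : ∃ q, q = 1/g := ⟨_, rfl⟩
    have hq0 : 0 < q := by rw [hq]; positivity
    rw [← hq] at hll hdt
    have b1' : c' * (d + q) ≤ P := by
      have : e * Mf (S c n ω) / g = e * Mf (S c n ω) * q := by rw [hq]; ring
      rw [this] at b1
      have : e/54 * q ≤ e * Mf (S c n ω) * q := by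
        apply mul_le_mul_of_nonneg_right _ hq0.le
        nlinarith
      nlinarith
    have b2' : R ≤ (1 + C) * (d + q)^2 := by
      have h1 : C * d / g = C * d * q := by rw [hq]; ring
      have h2 : C / g^2 = C * q^2 := by rw [hq]; ring
      rw [h1, h2] at b2
      have : 0 ≤ C * d * q := by positivity
      have : 0 ≤ d * q := by positivity
      have : 0 ≤ C * d^2 := by positivity
      nlinarith
    have m1 : l * (c' * (d + q)) ≤ l * P := mul_le_mul_of_nonneg_left b1' hlo
    have m2 : l^2 * R ≤ l^2 * ((1 + C) * (d + q)^2) := mul_le_mul_of_nonneg_left b2' (by positivity)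
    have m3 : l * (c' * (d + q)) = c' * t := by rw [← hll]; ring
    have m4 : l^2 * ((1 + C) * (d + q)^2) = (1 + C) * t * t := by rw [← hll]; ring
    have m5 : (1 + C) * t = c' := by rw [ht]; field_simp
    rw [m5] at m4
    linarith
  have hlev := hGi.tendsto_ae_condExp (ℱ := c.F) hGm
  filter_upwards [hlev, ae_all_iff.2 main, hL] with ω h1 h2 ⟨h3, _, h5⟩
  rcases eq_or_lt_of_le h5 with h | h
  · exfalso
    have hG0 : G ω = 0 := by simp [hG, h]
    rw [hG0] at h1
    rw [h] at h3
    have ev : ∀ᶠ n in atTop, c' * t ≤ μ[G | c.F n] ω := by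
      filter_upwards [h3.eventually (lt_mem_nhds (show (1/54:ℝ) < 1/27 by norm_num))] with n hn
      exact h2 n hn.le
    have := ge_of_tendsto h1 ev
    have : 0 < c' * t := by positivity
    linarith
  · exact h

end RPS
namespace RPS

variable {Ω : Type*} [mΩ : MeasurableSpace Ω] {μ : Measure Ω} [IsProbabilityMeasure μ] {α γ₀ : ℝ}

lemma mg_conv {F : Filtration ℕ mΩ} (A : ℕ → Ω → ℝ) (a : ℕ → ℝ)
    (hA : ∀ k, StronglyMeasurable[F (k+1)] (A k)) (hb : ∀ k, ∀ᵐ ω ∂μ, |A k ω| ≤ a k)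
    (h0 : ∀ k, μ[A k | F k] =ᵐ[μ] 0) (hs : Summable (fun k => a k ^ 2)) :
    ∀ᵐ ω ∂μ, ∃ l, Tendsto (fun n => ∑ k ∈ Finset.range n, A k ω) atTop (𝓝 l) := by
  set N : ℕ → Ω → ℝ := fun n ω => ∑ k ∈ Finset.range n, A k ω with hN
  have hNsucc : ∀ n, N (n+1) = N n + A n := by
    intro n; ext ω; simp [hN, Finset.sum_range_succ]
  have hNm : ∀ n, StronglyMeasurable[F n] (N n) := by
    intro n
    induction n with
    | zero => simp only [hN, Finset.range_zero, Finset.sum_empty]; exact stronglyMeasurable_const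
    | succ n ih => rw [hNsucc]; exact (ih.mono (F.mono n.le_succ)).add (hA n)
  have hAi : ∀ k, Integrable (A k) μ := fun k =>
    Integrable.of_bound ((hA k).mono (F.le _)).aestronglyMeasurable (a k) (hb k)
  have hNb : ∀ n, ∃ K, ∀ᵐ ω ∂μ, ‖N n ω‖ ≤ K := by
    intro n
    refine ⟨∑ k ∈ Finset.range n, a k, ?_⟩
    filter_upwards [ae_all_iff.2 hb] with ω hω
    exact (norm_sum_le _ _).trans (Finset.sum_le_sum fun k _ => hω k)
  have hNi : ∀ n, Integrable (N n) μ := fun n => by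
    obtain ⟨K, hK⟩ := hNb n
    exact Integrable.of_bound ((hNm n).mono (F.le _)).aestronglyMeasurable K hK
  have hmart : Martingale N F μ := by
    refine martingale_of_condExp_sub_eq_zero_nat hNm hNi fun n => ?_
    rw [hNsucc]
    simpa using h0 n
  have hNA : ∀ n, Integrable (N n * A n) μ := fun n => by
    obtain ⟨K, hK⟩ := hNb n
    exact (hAi n).bdd_mul ((hNm n).mono (F.le _)).aestronglyMeasurable hK
  have hNA0 : ∀ n, ∫ ω, (N n * A n) ω ∂μ = 0 := by
    intro n
    rw [← integral_condExp (F.le n)]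
    have h1 := condExp_mul_of_stronglyMeasurable_left (hNm n) (hNA n) (hAi n)
    have : μ[N n * A n | F n] =ᵐ[μ] 0 := by
      filter_upwards [h1, h0 n] with ω h1 h2
      rw [h1, Pi.mul_apply, h2]; simp
    rw [integral_congr_ae this]; simp
  have hN2 : ∀ n, Integrable (N n * N n) μ := fun n => by
    obtain ⟨K, hK⟩ := hNb n
    exact (hNi n).bdd_mul ((hNm n).mono (F.le _)).aestronglyMeasurable hK
  have hA2 : ∀ n, Integrable (A n * A n) μ := fun n =>
    (hAi n).bdd_mul ((hA n).mono (F.le _)).aestronglyMeasurable (hb n)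
  have hbd : ∀ n, ∫ ω, (N n * N n) ω ∂μ ≤ ∑ k ∈ Finset.range n, a k ^ 2 := by
    intro n
    induction n with
    | zero => simp [hN]
    | succ n ih =>
      have e : N (n+1) * N (n+1) = (N n * N n + (2:ℝ) • (N n * A n)) + A n * A n := by
        rw [hNsucc]; ext ω; simp; ring
      rw [e, Finset.sum_range_succ, integral_add' ((hN2 n).add ((hNA n).smul 2)) (hA2 n),
        integral_add' (hN2 n) ((hNA n).smul 2)]
      have e2 : ∫ ω, ((2:ℝ) • (N n * A n)) ω ∂μ = 0 := by
        have := hNA0 n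
        simp only [Pi.smul_apply]
        rw [integral_smul, this]; simp
      have e3 : ∫ ω, (A n * A n) ω ∂μ ≤ a n ^ 2 := by
        have : ∫ ω, (A n * A n) ω ∂μ ≤ ∫ ω, a n ^ 2 ∂μ := by
          apply integral_mono_ae (hA2 n) (integrable_const _)
          filter_upwards [hb n] with ω hω
          simp only [Pi.mul_apply]
          rw [← abs_mul_abs_self, sq]
          gcongr
          · exact (abs_nonneg _).trans hω
        simpa using this
      linarith
  have hL1 : ∀ n, eLpNorm (N n) 1 μ ≤ (Real.toNNReal (1 + ∑' k, a k ^ 2) : NNReal) := by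
    intro n
    rw [eLpNorm_one_eq_lintegral_enorm, ← ofReal_integral_norm_eq_lintegral_enorm (hNi n), ENNReal.ofReal]
    norm_cast
    apply Real.toNNReal_le_toNNReal
    have h1 : ∫ ω, ‖N n ω‖ ∂μ ≤ ∫ ω, (1 + (N n * N n) ω) ∂μ := by
      apply integral_mono (hNi n).norm ((integrable_const _).add (hN2 n))
      intro ω
      show |N n ω| ≤ 1 + N n ω * N n ω
      rw [← abs_mul_abs_self (N n ω)]
      nlinarith [sq_nonneg (|N n ω| - 1), abs_nonneg (N n ω)]
    rw [integral_add (integrable_const _) (hN2 n)] at h1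
    have h2 := hbd n
    have h3 := hs.sum_le_tsum (Finset.range n) (fun k _ => sq_nonneg (a k))
    simp only [integral_const, probReal_univ, smul_eq_mul, mul_one] at h1
    linarith
  exact hmart.submartingale.exists_ae_tendsto_of_bdd hL1

/-- cross product -/
def cr (s t : St) : ℝ := s.1 * (t.2.1 - t.2.2) + s.2.1 * (t.2.2 - t.1) + s.2.2 * (t.1 - t.2.1)

/-- squared norm of deviation -/
def nw (s : St) : ℝ := s.1^2 + s.2.1^2 + s.2.2^2 - s.1*s.2.1 - s.2.1*s.2.2 - s.2.2*s.1

/-- angular drift -/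
def dr (s : St) : ℝ := s.1 * (s.2.1 - s.2.2)^2 + s.2.1 * (s.2.2 - s.1)^2 + s.2.2 * (s.1 - s.2.1)^2

lemma cr_T (hα : -2 < α) (hγ₀ : 2 ≤ γ₀) (n : ℕ) (s : St) (h : s.1 + s.2.1 + s.2.2 = 1) :
    ∑ i, pr i s * cr s (T γ₀ α n i s) = (2 + α) * dr s / affGamma γ₀ α (n+1) := by
  obtain ⟨e1, e2, e3⟩ := E_incr α s h
  have hg := gam_ge hα hγ₀ (n+1)
  have : ∀ i, pr i s * cr s (T γ₀ α n i s) = (s.1 * (pr i s * (affIncr α i).2.1) - s.1 * (pr i s * (affIncr α i).2.2)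
     + s.2.1 * (pr i s * (affIncr α i).2.2) - s.2.1 * (pr i s * (affIncr α i).1)
     + s.2.2 * (pr i s * (affIncr α i).1) - s.2.2 * (pr i s * (affIncr α i).2.1)) / affGamma γ₀ α (n+1) := by
    intro i
    simp only [cr, T]
    field_simp
    ring
  simp_rw [this]
  rw [← Finset.sum_div]
  congr 1
  simp only [Finset.sum_add_distrib, Finset.sum_sub_distrib, ← Finset.mul_sum]
  rw [e1, e2, e3]
  unfold dr
  ring

lemma cr_bd (s t : St) (r : ℝ) (hx : 0 ≤ s.1) (hy : 0 ≤ s.2.1) (hz : 0 ≤ s.2.2) (h : s.1 + s.2.1 + s.2.2 = 1)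
    (h1 : |t.1 - s.1| ≤ r) (h2 : |t.2.1 - s.2.1| ≤ r) (h3 : |t.2.2 - s.2.2| ≤ r) : |cr s t| ≤ 3 * r := by
  have e : cr s t = (t.1 - s.1) * (s.2.2 - s.2.1) + (t.2.1 - s.2.1) * (s.1 - s.2.2) + (t.2.2 - s.2.2) * (s.2.1 - s.1) := by
    unfold cr; ring
  rw [e]
  have a1 : |s.2.2 - s.2.1| ≤ 1 := by rw [abs_le]; constructor <;> linarith
  have a2 : |s.1 - s.2.2| ≤ 1 := by rw [abs_le]; constructor <;> linarith
  have a3 : |s.2.1 - s.1| ≤ 1 := by rw [abs_le]; constructor <;> linarith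
  have hr : 0 ≤ r := (abs_nonneg _).trans h1
  have b : ∀ p q : ℝ, |p| ≤ r → |q| ≤ 1 → |p * q| ≤ r := fun p q hp hq => by
    rw [abs_mul]
    calc |p| * |q| ≤ r * 1 := by gcongr
      _ = r := mul_one r
  have c1 := b _ _ h1 a1
  have c2 := b _ _ h2 a2
  have c3 := b _ _ h3 a3
  have d1 := abs_add_le ((t.1 - s.1) * (s.2.2 - s.2.1) + (t.2.1 - s.2.1) * (s.1 - s.2.2)) ((t.2.2 - s.2.2) * (s.2.1 - s.1))
  have d2 := abs_add_le ((t.1 - s.1) * (s.2.2 - s.2.1)) ((t.2.1 - s.2.1) * (s.1 - s.2.2))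
  linarith

lemma dr_nonneg (s : St) (hx : 0 ≤ s.1) (hy : 0 ≤ s.2.1) (hz : 0 ≤ s.2.2) : 0 ≤ dr s := by
  unfold dr; positivity

lemma dr_le (s : St) (hx : 0 ≤ s.1) (hy : 0 ≤ s.2.1) (hz : 0 ≤ s.2.2) (h : s.1 + s.2.1 + s.2.2 = 1) : dr s ≤ 1 := by
  unfold dr
  have a1 : (s.2.1 - s.2.2)^2 ≤ 1 := by rw [sq_le_one_iff_abs_le_one, abs_le]; constructor <;> linarith
  have a2 : (s.2.2 - s.1)^2 ≤ 1 := by rw [sq_le_one_iff_abs_le_one, abs_le]; constructor <;> linarith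
  have a3 : (s.1 - s.2.1)^2 ≤ 1 := by rw [sq_le_one_iff_abs_le_one, abs_le]; constructor <;> linarith
  nlinarith

lemma dr_ge (s : St) (hx : 0 ≤ s.1) (hy : 0 ≤ s.2.1) (hz : 0 ≤ s.2.2) (h : s.1 + s.2.1 + s.2.2 = 1) :
    2 * Mf s * nw s ≤ dr s := by
  have e : 2 * nw s = (s.2.1 - s.2.2)^2 + (s.2.2 - s.1)^2 + (s.1 - s.2.1)^2 := by unfold nw; ring
  have h1 : Mf s ≤ s.1 := by
    unfold Mf
    have : s.2.1 * s.2.2 ≤ 1 := by nlinarith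
    nlinarith
  have h2 : Mf s ≤ s.2.1 := by
    unfold Mf
    have : s.1 * s.2.2 ≤ 1 := by nlinarith
    nlinarith
  have h3 : Mf s ≤ s.2.2 := by
    unfold Mf
    have : s.1 * s.2.1 ≤ 1 := by nlinarith
    nlinarith
  have : 2 * Mf s * nw s = Mf s * (s.2.1 - s.2.2)^2 + Mf s * (s.2.2 - s.1)^2 + Mf s * (s.1 - s.2.1)^2 := by
    linear_combination (Mf s) * e
  rw [this]
  unfold dr
  gcongr

lemma ae_ang (hα : -2 < α) (hγ₀ : 2 ≤ γ₀) (c : AffRPSChain μ α γ₀) (δ : ℝ) (hδ : 0 < δ) :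
    ∀ᵐ ω ∂μ, ∃ l, Tendsto (fun n => ∑ k ∈ Finset.range n,
      (cr (S c k ω) (S c (k+1) ω) - (2 + α) * dr (S c k ω) / affGamma γ₀ α (k+1)) / max (nw (S c k ω)) δ)
      atTop (𝓝 l) := by
  have h4 : 0 < 4 + α := by linarith
  have h2 : 0 < 2 + α := by linarith
  have mcr : Measurable (fun p : St × St => cr p.1 p.2) := by unfold cr; fun_prop
  have mdr : Measurable dr := by unfold dr; fun_prop
  have mnw : Measurable nw := by unfold nw; fun_prop
  have bound : ∀ k i (s : St), 0 ≤ s.1 → 0 ≤ s.2.1 → 0 ≤ s.2.2 → s.1 + s.2.1 + s.2.2 = 1 →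
      |(cr s (T γ₀ α k i s) - (2 + α) * dr s / affGamma γ₀ α (k+1)) / max (nw s) δ| ≤
        (3 * (4 + α) + (2 + α)) / δ / affGamma γ₀ α (k+1) := by
    intro k i s hx hy hz h
    have hg := gam_ge hα hγ₀ (k+1)
    obtain ⟨d1, d2, d3⟩ := disp hα hγ₀ k s hx hy hz h i
    have b1 := cr_bd s _ _ hx hy hz h d1 d2 d3
    have b2 := dr_nonneg s hx hy hz
    have b3 := dr_le s hx hy hz h
    have b4 : |(2 + α) * dr s / affGamma γ₀ α (k+1)| ≤ (2 + α) / affGamma γ₀ α (k+1) := by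
      rw [abs_of_nonneg (by positivity)]
      gcongr
      nlinarith
    have b5 := abs_sub (cr s (T γ₀ α k i s)) ((2 + α) * dr s / affGamma γ₀ α (k+1))
    have hmx : δ ≤ max (nw s) δ := le_max_right _ _
    rw [abs_div, abs_of_pos (lt_of_lt_of_le hδ hmx)]
    calc _ ≤ (3 * ((4 + α) / affGamma γ₀ α (k+1)) + (2 + α) / affGamma γ₀ α (k+1)) / δ := by
          gcongr
          linarith
      _ = _ := by ring
  have meas0 : ∀ k i, Measurable (fun s : St => (cr s (T γ₀ α k i s) - (2 + α) * dr s / affGamma γ₀ α (k+1)) / max (nw s) δ) := by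
    intro k i
    have h1 := mcr.comp (measurable_id.prodMk (measurable_T γ₀ α k i))
    exact (h1.sub ((mdr.const_mul _).div_const _)).div (mnw.max measurable_const)
  refine mg_conv (F := c.F) (fun k ω => (cr (S c k ω) (S c (k+1) ω) - (2 + α) * dr (S c k ω) / affGamma γ₀ α (k+1)) / max (nw (S c k ω)) δ)
    (fun k => (3 * (4 + α) + (2 + α)) / δ / affGamma γ₀ α (k+1)) ?_ ?_ ?_ ?_
  · intro k
    have h1 := meas_S c (k+1)
    have h0 := meas_S_le c k.le_succ
    have h3 := mcr.comp (h0.prodMk h1)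
    have h5 := (h3.sub (((mdr.comp h0).const_mul (2+α)).div_const (affGamma γ₀ α (k+1)))).div
      ((mnw.comp h0).max (measurable_const (a := δ)))
    exact h5.stronglyMeasurable
  · intro k
    filter_upwards [ae_path hα hγ₀ c] with ω hω
    obtain ⟨i, hi⟩ := hω k
    obtain ⟨hx, hy, hz, h⟩ := S_simplex c k ω
    rw [hi]
    exact bound k i _ hx hy hz h
  · intro k
    have hk := (key hα hγ₀ c k (fun ω => (cr (S c k ω) (S c (k+1) ω) - (2 + α) * dr (S c k ω) / affGamma γ₀ α (k+1)) / max (nw (S c k ω)) δ)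
      (fun i ω => (cr (S c k ω) (T γ₀ α k i (S c k ω)) - (2 + α) * dr (S c k ω) / affGamma γ₀ α (k+1)) / max (nw (S c k ω)) δ)
      (fun i => ((meas0 k i).comp (meas_S c k)).stronglyMeasurable)
      ((3 * (4 + α) + (2 + α)) / δ / affGamma γ₀ α (k+1))
      (fun i => Eventually.of_forall fun ω => by
        obtain ⟨hx, hy, hz, h⟩ := S_simplex c k ω
        exact bound k i _ hx hy hz h)
      (Eventually.of_forall fun ω i hi => by
        have : S c (k+1) ω = T γ₀ α k i (S c k ω) := hi
        simp only [this])).2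
    refine hk.trans (Eventually.of_forall fun ω => ?_)
    obtain ⟨hx, hy, hz, h⟩ := S_simplex c k ω
    simp only [Pi.zero_apply]
    simp_rw [← mul_div_assoc]
    rw [← Finset.sum_div]
    simp_rw [mul_sub]
    rw [Finset.sum_sub_distrib, ← Finset.sum_mul, cr_T hα hγ₀ k _ h, pr_sum _ h]
    simp
  · have hs : Summable (fun k : ℕ => ((3 * (4 + α) + (2 + α)) / δ)^2 * (1 / ((k:ℝ)+1)^2)) := by
      apply Summable.mul_left
      have := (summable_nat_add_iff 1).2 (Real.summable_one_div_nat_pow.2 (show 1 < 2 by norm_num))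
      simpa using this
    refine hs.of_nonneg_of_le (fun k => sq_nonneg _) fun k => ?_
    rw [div_pow, ← mul_one_div]
    have : (k:ℝ) + 1 ≤ affGamma γ₀ α (k+1) := by
      unfold affGamma; push_cast
      have : (0:ℝ) ≤ k := Nat.cast_nonneg k
      nlinarith
    gcongr

lemma nw_eq (s : St) (h : s.1 + s.2.1 + s.2.2 = 1) :
    nw s = 3/2 * ((s.1 - 1/3)^2 + (s.2.1 - 1/3)^2 + (s.2.2 - 1/3)^2) := by
  have : s.2.2 = 1 - s.1 - s.2.1 := by linarith
  unfold nw; rw [this]; ring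

lemma nw_ge (s : St) (hx : 0 ≤ s.1) (hy : 0 ≤ s.2.1) (hz : 0 ≤ s.2.2) (h : s.1 + s.2.1 + s.2.2 = 1) :
    1/27 - Mf s ≤ nw s := by
  have h1 := D_le_V s.1 s.2.1 s.2.2 hx hy hz h
  rw [nw_eq s h]
  have : 0 ≤ (s.1 - 1/3)^2 + (s.2.1 - 1/3)^2 + (s.2.2 - 1/3)^2 := by positivity
  unfold Mf
  linarith

lemma ang_div (hα : -2 < α) (hγ₀ : 2 ≤ γ₀) (s : ℕ → St) (M δ m : ℝ)
    (hs : ∀ n, 0 ≤ (s n).1 ∧ 0 ≤ (s n).2.1 ∧ 0 ≤ (s n).2.2 ∧ (s n).1 + (s n).2.1 + (s n).2.2 = 1)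
    (hM : Tendsto (fun n => Mf (s n)) atTop (𝓝 M)) (hδ : 0 < δ) (hMδ : δ < 1/27 - M)
    (hm : 0 < m) (hm' : ∀ n, m ≤ Mf (s n))
    (hl : ∃ l, Tendsto (fun n => ∑ k ∈ Finset.range n,
      (cr (s k) (s (k+1)) - (2 + α) * dr (s k) / affGamma γ₀ α (k+1)) / max (nw (s k)) δ) atTop (𝓝 l)) :
    ∃ k0, (∀ k, k0 ≤ k → δ ≤ nw (s k)) ∧
      Tendsto (fun n => ∑ k ∈ Finset.range n, cr (s (k0 + k)) (s (k0 + k + 1)) / nw (s (k0 + k))) atTop atTop := by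
  obtain ⟨l, hl⟩ := hl
  have h2 : 0 < 2 + α := by linarith
  have h4 : 0 < 4 + α := by linarith
  have ev : ∀ᶠ n in atTop, δ ≤ nw (s n) := by
    filter_upwards [hM.eventually (gt_mem_nhds (show M < 1/27 - δ by linarith))] with n hn
    obtain ⟨hx, hy, hz, h⟩ := hs n
    have := nw_ge (s n) hx hy hz h
    linarith
  obtain ⟨k0, hk0⟩ := eventually_atTop.1 ev
  refine ⟨k0, hk0, ?_⟩
  set u : ℕ → ℝ := fun k => (cr (s k) (s (k+1)) - (2 + α) * dr (s k) / affGamma γ₀ α (k+1)) / max (nw (s k)) δ with hu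
  have t1 : Tendsto (fun n => ∑ k ∈ Finset.range n, u (k0 + k)) atTop (𝓝 (l - ∑ k ∈ Finset.range k0, u k)) := by
    have h5 : Tendsto (fun n => ∑ k ∈ Finset.range (n + k0), u k) atTop (𝓝 l) :=
      (tendsto_add_atTop_iff_nat k0).2 hl
    refine (h5.sub_const (∑ k ∈ Finset.range k0, u k)).congr fun n => ?_
    rw [add_comm n k0, Finset.sum_range_add]; ring
  obtain ⟨B, hB⟩ : ∃ B, B = γ₀ + (4 + α) * (k0 + 1) + (4 + α) := ⟨_, rfl⟩
  have hB0 : 0 < B := by rw [hB]; positivity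
  have t2 : Tendsto (fun n => ∑ k ∈ Finset.range n, 2 * (2 + α) * m / B * (1 / ((k:ℝ) + 1))) atTop atTop := by
    simp_rw [← Finset.mul_sum]
    exact Real.tendsto_sum_range_one_div_nat_succ_atTop.const_mul_atTop (by positivity)
  refine tendsto_atTop_mono (fun n => ?_) (t1.add_atTop t2)
  rw [← Finset.sum_add_distrib]
  apply Finset.sum_le_sum
  intro k _
  have hn := hk0 (k0 + k) (by omega)
  obtain ⟨hx, hy, hz, h⟩ := hs (k0 + k)
  have hd := dr_ge _ hx hy hz h
  have hmm := hm' (k0 + k)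
  simp only [hu]
  rw [max_eq_left hn]
  have hn0 : 0 < nw (s (k0 + k)) := lt_of_lt_of_le hδ hn
  have hg := gam_ge hα hγ₀ (k0 + k + 1)
  have key : 2 * (2 + α) * m / B * (1 / ((k:ℝ) + 1)) ≤ (2 + α) * dr (s (k0 + k)) / affGamma γ₀ α (k0 + k + 1) / nw (s (k0 + k)) := by
    have hgB : affGamma γ₀ α (k0 + k + 1) ≤ B * ((k:ℝ) + 1) := by
      unfold affGamma; rw [hB]; push_cast
      have : (0:ℝ) ≤ k := Nat.cast_nonneg k
      have : (0:ℝ) ≤ k0 := Nat.cast_nonneg k0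
      have : 0 ≤ γ₀ * k := by positivity
      have : 0 ≤ (4 + α) * (k0 + 1) * k := by positivity
      nlinarith
    calc 2 * (2 + α) * m / B * (1 / ((k:ℝ) + 1)) = 2 * (2 + α) * m / (B * ((k:ℝ) + 1)) := by
          field_simp
      _ ≤ 2 * (2 + α) * m / affGamma γ₀ α (k0 + k + 1) := by gcongr
      _ = (2 + α) * (2 * m * nw (s (k0 + k))) / affGamma γ₀ α (k0 + k + 1) / nw (s (k0 + k)) := by
          field_simp
      _ ≤ _ := by
          gcongr
          refine le_trans ?_ hd
          gcongr
  rw [sub_div]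
  linarith

end RPS
namespace RPS

lemma ray_core (a b e r : ℝ) (h : a + b + e = 0) (hb : b < 0) (he : e < 0) (hb1 : 0 ≤ 1/3 + b)
    (he1 : 0 ≤ 1/3 + e) (hb2 : 0 ≤ 1/3 + r * b) (he2 : 0 ≤ 1/3 + r * e) (hr : 0 ≤ r) (hr1 : r ≠ 1) :
    (r^2 + r + 1) * (a * b * e) < (r + 1) * (-(a*b + b*e + e*a)) / 3 := by
  obtain ⟨β, hβ⟩ : ∃ β, β = -b := ⟨_, rfl⟩
  obtain ⟨ε, hε⟩ : ∃ ε, ε = -e := ⟨_, rfl⟩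
  have hb' : b = -β := by linarith
  have he' : e = -ε := by linarith
  have ha' : a = β + ε := by linarith
  subst hb' he' ha'
  have hβ0 : 0 < β := by linarith
  have hε0 : 0 < ε := by linarith
  have hbe : 0 < β * ε := by positivity
  -- main inequality
  have key : (r^2 + r + 1) * (β + ε) < r + 1 := by
    rcases lt_or_gt_of_ne hr1 with h1 | h1
    · have : r^2 + r + 1 < 3/2 * (r + 1) := by nlinarith
      nlinarith
    · have h2 : r^2 + r + 1 < 3/2 * (r * (r + 1)) := by nlinarith
      have h3 : r * (β + ε) ≤ 2/3 := by linarith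
      have h4 : 0 < β + ε := by linarith
      calc (r^2 + r + 1) * (β + ε) < 3/2 * (r * (r + 1)) * (β + ε) := by gcongr
        _ = 3/2 * (r + 1) * (r * (β + ε)) := by ring
        _ ≤ 3/2 * (r + 1) * (2/3) := by gcongr
        _ = r + 1 := by ring
  have k2 : (r^2 + r + 1) * (β + ε) * (β * ε) < (r + 1) * (β * ε) := by gcongr
  have k3 : 0 ≤ (r + 1) * (β - ε)^2 := by positivity
  nlinarith

lemma ray (a b e r : ℝ) (h : a + b + e = 0) (ha1 : 0 ≤ 1/3 + a) (hb1 : 0 ≤ 1/3 + b)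
    (he1 : 0 ≤ 1/3 + e) (ha2 : 0 ≤ 1/3 + r * a) (hb2 : 0 ≤ 1/3 + r * b) (he2 : 0 ≤ 1/3 + r * e) (hr : 0 ≤ r)
    (hv : 0 < a^2 + b^2 + e^2)
    (hM : (1/3 + r * a) * (1/3 + r * b) * (1/3 + r * e) = (1/3 + a) * (1/3 + b) * (1/3 + e)) : r = 1 := by
  by_contra hr1
  have hσ : -(a*b + b*e + e*a) = (a^2 + b^2 + e^2)/2 := by
    have : (a + b + e)^2 = 0 := by rw [h]; ring
    linarith
  have e1 : (r - 1) * ((r^2 + r + 1) * (a * b * e) - (r + 1) * (-(a*b + b*e + e*a)) / 3) = 0 := by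
    have : e = -a - b := by linarith
    subst this
    linear_combination hM
  have e2 : (r^2 + r + 1) * (a * b * e) = (r + 1) * (-(a*b + b*e + e*a)) / 3 := by
    rcases mul_eq_zero.1 e1 with h1 | h1
    · exact absurd (by linarith) hr1
    · linarith
  have hpos : 0 < a * b * e := by
    by_contra hn
    push Not at hn
    have : 0 < (r + 1) * (-(a*b + b*e + e*a)) / 3 := by rw [hσ]; positivity
    have : (r^2 + r + 1) * (a * b * e) ≤ 0 := mul_nonpos_of_nonneg_of_nonpos (by positivity) hn
    linarith
  rcases pos_and_pos_or_neg_and_neg_of_mul_pos hpos with ⟨h1, h2⟩ | ⟨h1, h2⟩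
  · rcases pos_and_pos_or_neg_and_neg_of_mul_pos h1 with ⟨h3, h4⟩ | ⟨h3, h4⟩
    · linarith
    · have := ray_core e a b r (by linarith) h3 h4 ha1 hb1 ha2 hb2 hr hr1
      nlinarith
  · rcases lt_or_ge a 0 with h3 | h3
    · have := ray_core b e a r (by linarith) h2 h3 he1 ha1 he2 ha2 hr hr1
      nlinarith
    · have h4 : b < 0 := by
        by_contra hn
        push Not at hn
        have : 0 ≤ a * b := by positivity
        linarith
      have := ray_core a b e r (by linarith) h4 h2 hb1 he1 hb2 he2 hr hr1
      linarith

/-- complex coordinate -/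
def wc (s : St) : ℂ := ⟨s.1 - (s.2.1 + s.2.2)/2, √3/2 * (s.2.1 - s.2.2)⟩

lemma sq3 : √3 * √3 = 3 := Real.mul_self_sqrt (by norm_num)

lemma wc_normSq (s : St) : Complex.normSq (wc s) = nw s := by
  simp only [Complex.normSq_apply, wc, nw]
  linear_combination ((s.2.1 - s.2.2)^2/4) * sq3

lemma wc_sq (s : St) : ‖wc s‖^2 = nw s := by
  rw [← wc_normSq, Complex.normSq_eq_norm_sq]

lemma wc_cr (s t : St) : (wc t / wc s).im = √3/2 * (cr s t / nw s) := by
  rw [Complex.div_im, wc_normSq]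
  simp only [wc, cr]
  ring

lemma wc_ray (p q : St) (hp : p.1 + p.2.1 + p.2.2 = 1) (hq : q.1 + q.2.1 + q.2.2 = 1) (r : ℝ)
    (h : wc q = r * wc p) : q.1 = 1/3 + r * (p.1 - 1/3) ∧ q.2.1 = 1/3 + r * (p.2.1 - 1/3) ∧
      q.2.2 = 1/3 + r * (p.2.2 - 1/3) := by
  have h1 := congrArg Complex.re h
  have h2 := congrArg Complex.im h
  simp only [wc, Complex.mul_re, Complex.mul_im, Complex.ofReal_re, Complex.ofReal_im] at h1 h2
  have h3 : 0 < √3 := by positivity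
  have h4 : √3 * ((q.2.1 - q.2.2) - r * (p.2.1 - p.2.2)) = 0 := by linarith
  have h5 : (q.2.1 - q.2.2) - r * (p.2.1 - p.2.2) = 0 := by
    rcases mul_eq_zero.1 h4 with h | h
    · linarith
    · exact h
  have h6 : q.1 - (1 - q.1)/2 = r * (p.1 - (1 - p.1)/2) := by
    have e1 : q.2.1 + q.2.2 = 1 - q.1 := by linarith
    have e2 : p.2.1 + p.2.2 = 1 - p.1 := by linarith
    rw [e1, e2] at h1; linarith
  have h7 : p.2.2 = 1 - p.1 - p.2.1 := by linarith
  rw [h7] at h5 ⊢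
  refine ⟨?_, ?_, ?_⟩
  · nlinarith
  · nlinarith
  · nlinarith

/-- simplex -/
def Sx (s : St) : Prop := 0 ≤ s.1 ∧ 0 ≤ s.2.1 ∧ 0 ≤ s.2.2 ∧ s.1 + s.2.1 + s.2.2 = 1

lemma ray_unique (p q : St) (hp : Sx p) (hq : Sx q) (hM : Mf p = Mf q) (hlt : Mf p < 1/27) (r : ℝ) (hr : 0 ≤ r)
    (h : wc q = r * wc p) : q = p := by
  obtain ⟨p1, p2, p3, p4⟩ := hp
  obtain ⟨q1, q2, q3, q4⟩ := hq
  obtain ⟨e1, e2, e3⟩ := wc_ray p q p4 q4 r h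
  have hv := D_le_V _ _ _ p1 p2 p3 p4
  unfold Mf at hM hlt
  have : r = 1 := by
    refine ray (p.1 - 1/3) (p.2.1 - 1/3) (p.2.2 - 1/3) r (by linarith) (by linarith) (by linarith) (by linarith)
      (by linarith) (by linarith) (by linarith) hr (by linarith) ?_
    rw [← e1, ← e2, ← e3, ← hM]
    ring
  rw [this] at e1 e2 e3
  ext
  · linarith
  · linarith
  · linarith

lemma hit (ψ : ℕ → ℝ) (hψ : Tendsto ψ atTop atTop) (hi : Tendsto (fun n => ψ (n+1) - ψ n) atTop (𝓝 0))
    (φ ε : ℝ) (hε : 0 < ε) (N : ℕ) : ∃ n, N ≤ n ∧ ∃ m : ℕ, |ψ n - (φ + m * (2 * Real.pi))| < ε := by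
  obtain ⟨N1, hN1⟩ := eventually_atTop.1 (hi.eventually (gt_mem_nhds hε))
  set N' := max N N1
  obtain ⟨m, hm⟩ := exists_nat_gt ((ψ N' - φ) / (2 * Real.pi))
  have hπ : 0 < 2 * Real.pi := by positivity
  rw [div_lt_iff₀ hπ] at hm
  set t := φ + m * (2 * Real.pi) with ht
  have hex : ∃ n, t ≤ ψ (N' + n) := by
    obtain ⟨n0, hn0⟩ := eventually_atTop.1 (hψ.eventually_ge_atTop t)
    exact ⟨n0, hn0 _ (by omega)⟩
  classical
  have h1 := Nat.find_spec hex
  have h2 := fun k => Nat.find_min hex (m := k)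
  set n := Nat.find hex
  have hn : n ≠ 0 := by
    intro h0
    rw [h0, add_zero] at h1
    linarith
  obtain ⟨k, hk⟩ := Nat.exists_eq_succ_of_ne_zero hn
  refine ⟨N' + n, by omega, m, ?_⟩
  have h3 := h2 k (by omega)
  push Not at h3
  have h4 := hN1 (N' + k) (by omega)
  have h5 : N' + n = N' + k + 1 := by omega
  rw [h5] at h1 ⊢
  rw [abs_lt]; constructor <;> linarith

end RPS
namespace RPS

lemma wc_diff (s t : St) (r : ℝ) (h1 : |t.1 - s.1| ≤ r) (h2 : |t.2.1 - s.2.1| ≤ r) (h3 : |t.2.2 - s.2.2| ≤ r) :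
    ‖wc t - wc s‖ ≤ 4 * r := by
  refine (Complex.norm_le_abs_re_add_abs_im _).trans ?_
  simp only [wc, Complex.sub_re, Complex.sub_im]
  rw [abs_le] at h1 h2 h3
  have hs : √3 ≤ 2 := by rw [Real.sqrt_le_left (by norm_num)]; norm_num
  have hs0 : 0 ≤ √3 := by positivity
  have e : √3/2 * (t.2.1 - t.2.2) - √3/2 * (s.2.1 - s.2.2) = √3/2 * ((t.2.1 - s.2.1) - (t.2.2 - s.2.2)) := by ring
  rw [e, abs_mul, abs_of_nonneg (by positivity : (0:ℝ) ≤ √3/2)]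
  have b1 : |t.1 - (t.2.1 + t.2.2)/2 - (s.1 - (s.2.1 + s.2.2)/2)| ≤ 2 * r := by
    rw [abs_le]; constructor <;> linarith
  have b2 : |(t.2.1 - s.2.1) - (t.2.2 - s.2.2)| ≤ 2 * r := by
    rw [abs_le]; constructor <;> linarith
  have b3 : √3/2 * |(t.2.1 - s.2.1) - (t.2.2 - s.2.2)| ≤ 1 * (2 * r) := by
    gcongr
    linarith
  linarith

lemma isCompact_Sx : IsCompact {s : St | Sx s} := by
  apply IsCompact.of_isClosed_subset (isCompact_Icc (a := ((0:ℝ), (0:ℝ), (0:ℝ))) (b := ((1:ℝ), (1:ℝ), (1:ℝ))))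
  · have e : {s : St | Sx s} = ({s : St | 0 ≤ s.1} ∩ {s | 0 ≤ s.2.1}) ∩ ({s | 0 ≤ s.2.2} ∩ {s | s.1 + s.2.1 + s.2.2 = 1}) := by
      ext s; simp [Sx, and_assoc]
    rw [e]
    refine IsClosed.inter (IsClosed.inter ?_ ?_) (IsClosed.inter ?_ ?_)
    · exact isClosed_le (by fun_prop) (by fun_prop)
    · exact isClosed_le (by fun_prop) (by fun_prop)
    · exact isClosed_le (by fun_prop) (by fun_prop)
    · exact isClosed_eq (by fun_prop) (by fun_prop)
  · rintro ⟨x, y, z⟩ ⟨h1, h2, h3, h4⟩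
    simp only at h1 h2 h3 h4
    refine ⟨⟨h1, h2, h3⟩, ⟨?_, ?_, ?_⟩⟩ <;> simp only <;> linarith

lemma continuous_Mf : Continuous Mf := by unfold Mf; fun_prop

lemma continuous_wc : Continuous wc := by
  have : wc = fun s : St => ((s.1 - (s.2.1 + s.2.2)/2 : ℝ) : ℂ) + ((√3/2 * (s.2.1 - s.2.2) : ℝ) : ℂ) * Complex.I := by
    ext s
    exact Complex.mk_eq_add_mul_I _ _
  rw [this]
  fun_prop

lemma polar (w : ℕ → ℂ) (hw : ∀ n, w n ≠ 0) (n : ℕ) :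
    w n = ‖w n‖ * Complex.exp ((((w 0).arg + ∑ k ∈ Finset.range n, (w (k+1) / w k).arg : ℝ) : ℂ) * Complex.I) := by
  induction n with
  | zero => simp [Complex.norm_mul_exp_arg_mul_I]
  | succ n ih =>
    have h1 := Complex.norm_mul_exp_arg_mul_I (w (n+1) / w n)
    have h2 : w (n+1) = (w (n+1) / w n) * w n := (div_mul_cancel₀ _ (hw n)).symm
    rw [Finset.sum_range_succ]
    have h3 : ‖w (n+1)‖ = ‖w (n+1) / w n‖ * ‖w n‖ := by rw [← norm_mul, ← h2]
    have h4 : (((w 0).arg + (∑ k ∈ Finset.range n, (w (k+1) / w k).arg + (w (n+1) / w n).arg) : ℝ) : ℂ) * Complex.I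
      = (((w 0).arg + ∑ k ∈ Finset.range n, (w (k+1) / w k).arg : ℝ) : ℂ) * Complex.I + ((w (n+1) / w n).arg : ℂ) * Complex.I := by
      push_cast; ring
    rw [h4, Complex.exp_add, h3]
    calc w (n+1) = (w (n+1) / w n) * w n := h2
      _ = (‖w (n+1) / w n‖ * Complex.exp (((w (n+1) / w n).arg : ℂ) * Complex.I)) *
          (‖w n‖ * Complex.exp ((((w 0).arg + ∑ k ∈ Finset.range n, (w (k+1) / w k).arg : ℝ) : ℂ) * Complex.I)) := by
          rw [h1, ← ih]
      _ = _ := by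
          rw [Complex.ofReal_mul]
          ring

lemma arg_sum (w : ℕ → ℂ) (ρ : ℕ → ℝ) (hw : ∀ n, w n ≠ 0) (hρ : ∀ n, ‖w (n+1) / w n - 1‖ ≤ ρ n)
    (hs : Summable (fun n => ρ n ^ 2))
    (hd : Tendsto (fun n => ∑ k ∈ Finset.range n, (w (k+1) / w k).im) atTop atTop) :
    Tendsto (fun n => ∑ k ∈ Finset.range n, (w (k+1) / w k).arg) atTop atTop ∧
      Tendsto (fun n => (w (n+1) / w n).arg) atTop (𝓝 0) := by
  have hρ0 : Tendsto ρ atTop (𝓝 0) := by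
    have h1 := hs.tendsto_atTop_zero
    have h2 := (Real.continuous_sqrt.tendsto 0).comp h1
    rw [Real.sqrt_zero] at h2
    refine h2.congr fun n => ?_
    simp only [Function.comp]
    exact Real.sqrt_sq ((norm_nonneg _).trans (hρ n))
  have hq : Tendsto (fun n => w (n+1) / w n) atTop (𝓝 1) := by
    rw [tendsto_iff_norm_sub_tendsto_zero]
    exact squeeze_zero (fun n => norm_nonneg _) hρ hρ0
  have hsum : Summable (fun n => (w (n+1) / w n).arg - (w (n+1) / w n).im) := by
    apply Summable.of_norm_bounded_eventually_nat hs
    filter_upwards [hρ0.eventually (gt_mem_nhds (show (0:ℝ) < 1/2 by norm_num))] with n hn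
    obtain ⟨z, hz⟩ : ∃ z, z = w (n+1) / w n - 1 := ⟨_, rfl⟩
    have hz' : w (n+1) / w n = 1 + z := by rw [hz]; ring
    have h1 : ‖z‖ ≤ ρ n := by rw [hz]; exact hρ n
    have h2 := Complex.norm_log_one_add_sub_self_le (z := z) (by linarith)
    rw [hz']
    have h3 : (1 + z).arg - (1 + z).im = (Complex.log (1 + z) - z).im := by
      simp [Complex.log_im]
    rw [h3]
    refine (Complex.abs_im_le_norm _).trans (h2.trans ?_)
    have h4 : (1 - ‖z‖)⁻¹ ≤ 2 := by
      rw [inv_le_comm₀ (by linarith) (by norm_num)]; linarith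
    have h5 : ‖z‖^2 ≤ ρ n ^ 2 := by gcongr
    have h6 : 0 ≤ ‖z‖^2 := by positivity
    nlinarith
  constructor
  · have h1 := hsum.hasSum.tendsto_sum_nat.add_atTop hd
    refine h1.congr fun n => ?_
    rw [← Finset.sum_add_distrib]
    simp
  · have := (Complex.continuousAt_arg (x := 1) (by simp)).tendsto.comp hq
    rw [Complex.arg_one] at this
    exact this

lemma cluster_det (s : ℕ → St) (M δ : ℝ) (r : ℕ → ℝ) (hs : ∀ n, Sx (s n))
    (hM : Tendsto (fun n => Mf (s n)) atTop (𝓝 M)) (hM1 : M < 1/27) (hδ : 0 < δ) (hr : ∀ n,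
      |(s (n+1)).1 - (s n).1| ≤ r n ∧ |(s (n+1)).2.1 - (s n).2.1| ≤ r n ∧ |(s (n+1)).2.2 - (s n).2.2| ≤ r n)
    (hr2 : Summable (fun n => r n ^ 2)) (hn : ∀ n, δ ≤ nw (s n))
    (hd : Tendsto (fun n => ∑ k ∈ Finset.range n, cr (s k) (s (k+1)) / nw (s k)) atTop atTop)
    (p : St) (hp : Sx p) (hpM : Mf p = M) : MapClusterPt p atTop s := by
  set w : ℕ → ℂ := fun n => wc (s n) with hwdef
  have hsd : 0 < √δ := by positivity
  have hwn : ∀ n, √δ ≤ ‖w n‖ := fun n => by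
    apply Real.sqrt_le_iff.2 ⟨norm_nonneg _, ?_⟩
    rw [hwdef, wc_sq]; exact hn n
  have hw : ∀ n, w n ≠ 0 := fun n => norm_pos_iff.1 (lt_of_lt_of_le hsd (hwn n))
  have hρ : ∀ n, ‖w (n+1) / w n - 1‖ ≤ (4/√δ) * r n := fun n => by
    have h1 : w (n+1) / w n - 1 = (w (n+1) - w n) / w n := by rw [sub_div, div_self (hw n)]
    obtain ⟨a1, a2, a3⟩ := hr n
    have h2 := wc_diff _ _ _ a1 a2 a3
    have h0 : 0 ≤ r n := (abs_nonneg _).trans a1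
    rw [h1, norm_div]
    calc _ ≤ 4 * r n / √δ := by
          gcongr
          exact hwn n
      _ = _ := by ring
  have hs2 : Summable (fun n => ((4/√δ) * r n)^2) := by
    simp_rw [mul_pow]; exact hr2.mul_left _
  have hd' : Tendsto (fun n => ∑ k ∈ Finset.range n, (w (k+1) / w k).im) atTop atTop := by
    have : ∀ k, (w (k+1) / w k).im = √3/2 * (cr (s k) (s (k+1)) / nw (s k)) := fun k => wc_cr _ _
    simp_rw [this, ← Finset.mul_sum]
    exact hd.const_mul_atTop (by positivity)
  obtain ⟨hψ, hi⟩ := arg_sum w _ hw hρ hs2 hd'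
  set ψ : ℕ → ℝ := fun n => ∑ k ∈ Finset.range n, (w (k+1) / w k).arg with hψdef
  have hi' : Tendsto (fun n => ψ (n+1) - ψ n) atTop (𝓝 0) := by
    refine hi.congr fun n => ?_
    simp [hψdef, Finset.sum_range_succ]
  set φ : ℝ := (wc p).arg - (w 0).arg with hφ
  have hh := fun j : ℕ => hit ψ hψ hi' φ (1/((j:ℝ)+1)) (by positivity) j
  choose n hnj m hm using hh
  have hnt : Tendsto n atTop atTop := tendsto_atTop_mono hnj tendsto_id
  obtain ⟨q, hq, g, hg, hlim⟩ := isCompact_Sx.tendsto_subseq (x := fun j => s (n j)) (fun j => hs (n j))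
  have hng : Tendsto (fun j => n (g j)) atTop atTop := hnt.comp hg.tendsto_atTop
  have hMq : Mf q = M :=
    tendsto_nhds_unique ((continuous_Mf.tendsto q).comp hlim) (hM.comp hng)
  have hwq : Tendsto (fun j => w (n (g j))) atTop (𝓝 (wc q)) := (continuous_wc.tendsto q).comp hlim
  have hang : Tendsto (fun j => ψ (n j) - m j * (2 * Real.pi)) atTop (𝓝 φ) := by
    rw [tendsto_iff_norm_sub_tendsto_zero]
    refine squeeze_zero (fun j => norm_nonneg _) (fun j => ?_) tendsto_one_div_add_atTop_nhds_zero_nat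
    rw [Real.norm_eq_abs]
    have h1 := (hm j).le
    have h2 : ψ (n j) - m j * (2 * Real.pi) - φ = ψ (n j) - (φ + m j * (2 * Real.pi)) := by ring
    rw [h2]; exact h1
  have hexp : Tendsto (fun j => Complex.exp (((w 0).arg + (ψ (n j) - m j * (2 * Real.pi)) : ℝ) * Complex.I)) atTop
      (𝓝 (Complex.exp (((wc p).arg : ℝ) * Complex.I))) := by
    have h1 := hang.const_add ((w 0).arg)
    have h2 : (w 0).arg + φ = (wc p).arg := by rw [hφ]; ring
    rw [h2] at h1
    have h3 : Continuous (fun x : ℝ => Complex.exp ((x:ℂ) * Complex.I)) := by fun_prop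
    exact (h3.tendsto _).comp h1
  have hpol : ∀ j, w (n j) = ‖w (n j)‖ * Complex.exp (((w 0).arg + (ψ (n j) - m j * (2 * Real.pi)) : ℝ) * Complex.I) := by
    intro j
    have h1 := polar w hw (n j)
    have h2 : Complex.exp (((w 0).arg + (ψ (n j) - m j * (2 * Real.pi)) : ℝ) * Complex.I)
      = Complex.exp ((((w 0).arg + ∑ k ∈ Finset.range (n j), (w (k+1) / w k).arg : ℝ) : ℂ) * Complex.I) := by
      rw [Complex.exp_eq_exp_iff_exists_int]
      refine ⟨-(m j : ℤ), ?_⟩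
      simp only [hψdef]
      push_cast
      ring
    rw [h2]; exact h1
  have hwq2 : Tendsto (fun j => w (n (g j))) atTop (𝓝 (‖wc q‖ * Complex.exp (((wc p).arg : ℝ) * Complex.I))) := by
    have h1 : Tendsto (fun j => ((‖w (n (g j))‖ : ℝ) : ℂ)) atTop (𝓝 (‖wc q‖ : ℂ)) :=
      (Complex.continuous_ofReal.tendsto _).comp hwq.norm
    refine (h1.mul (hexp.comp hg.tendsto_atTop)).congr fun j => ?_
    exact (hpol (g j)).symm
  have heq := tendsto_nhds_unique hwq hwq2
  have hnp : 0 < ‖wc p‖ := by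
    have h1 := nw_ge p hp.1 hp.2.1 hp.2.2.1 hp.2.2.2
    have h2 := wc_sq p
    by_contra h
    have h3 : ‖wc p‖ = 0 := le_antisymm (not_lt.1 h) (norm_nonneg _)
    rw [h3] at h2
    rw [hpM] at h1
    linarith
  have hqp : q = p := by
    refine ray_unique p q hp hq (by rw [hpM, hMq]) (by rw [hpM]; exact hM1) (‖wc q‖ / ‖wc p‖) (by positivity) ?_
    nth_rewrite 1 [heq]
    have h0 : (‖wc p‖ : ℂ) ≠ 0 := by exact_mod_cast hnp.ne'
    have h5 := Complex.norm_mul_exp_arg_mul_I (wc p)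
    calc (‖wc q‖ : ℂ) * Complex.exp (((wc p).arg : ℝ) * Complex.I) = ((‖wc q‖ / ‖wc p‖ : ℝ) : ℂ) *
          (‖wc p‖ * Complex.exp (((wc p).arg : ℝ) * Complex.I)) := by
          push_cast
          field_simp
      _ = _ := by rw [h5]
  rw [hqp] at hlim
  have h1 : MapClusterPt p atTop (s ∘ fun j => n (g j)) := hlim.mapClusterPt
  exact h1.of_comp hng

end RPS
namespace RPS

variable {Ω : Type*} [mΩ : MeasurableSpace Ω] {μ : Measure Ω} [IsProbabilityMeasure μ] {α γ₀ : ℝ}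

/-- event of following a word -/
def Wd (c : AffRPSChain μ α γ₀) (u : ℕ → Fin 6) (n : ℕ) : Set Ω := {ω | ∀ k < n, ω ∈ E c k (u k)}

lemma Wd_succ (c : AffRPSChain μ α γ₀) (u : ℕ → Fin 6) (n : ℕ) :
    Wd c u (n+1) = Wd c u n ∩ E c n (u n) := by
  ext ω
  constructor
  · intro h
    exact ⟨fun k hk => h k (by omega), h n (by omega)⟩
  · rintro ⟨h1, h2⟩ k hk
    rcases Nat.lt_succ_iff_lt_or_eq.1 hk with h | h
    · exact h1 k h
    · subst h; exact h2

lemma meas_Wd (c : AffRPSChain μ α γ₀) (u : ℕ → Fin 6) (n : ℕ) : MeasurableSet[c.F n] (Wd c u n) := by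
  induction n with
  | zero => simp [Wd]
  | succ n ih =>
    rw [Wd_succ]
    exact (c.F.mono n.le_succ _ ih).inter (meas_E c n (u n))

lemma Wd_pos (hα : -2 < α) (hγ₀ : 2 ≤ γ₀) (c : AffRPSChain μ α γ₀) (u : ℕ → Fin 6) (n : ℕ) :
    0 < μ (Wd c u n) := by
  obtain ⟨m, hm0, hm⟩ := exists_m hγ₀ c
  have hgood := ae_good hα hγ₀ c hm
  induction n with
  | zero => simp [Wd]
  | succ n ih =>
    rw [pos_iff_ne_zero] at ih ⊢
    intro h0
    apply ih
    rw [Wd_succ] at h0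
    have hAm := meas_Wd c u n
    have h1 : ∫ ω in Wd c u n, (E c n (u n)).indicator (fun _ => (1:ℝ)) ω ∂μ = 0 := by
      rw [setIntegral_indicator (meas_E' c n (u n))]
      rw [setIntegral_measure_zero _ h0]
    rw [← setIntegral_condExp (c.F.le n) ((integrable_const (1:ℝ)).indicator (meas_E' c n (u n))) hAm,
      setIntegral_congr_ae (g := fun ω => pr (u n) (S c n ω)) (c.F.le n _ hAm)
        (by filter_upwards [step' c n (u n)] with ω h _ using h)] at h1
    have hpi : Integrable (fun ω => pr (u n) (S c n ω)) μ := integrable_condExp.congr (step' c n (u n))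
    rw [integral_eq_zero_iff_of_nonneg_ae ?_ hpi.integrableOn] at h1
    · have h2 : ∀ᵐ ω ∂μ.restrict (Wd c u n), False := by
        filter_upwards [h1, ae_restrict_of_ae hgood] with ω h1 h2
        obtain ⟨a1, a2, a3⟩ := (h2 n).pos hα hγ₀ hm0
        have := pr_pos (u n) _ a1 a2 a3
        simp only [Pi.zero_apply] at h1
        linarith
      simpa using h2
    · refine Eventually.of_forall fun ω => ?_
      obtain ⟨a1, a2, a3, _⟩ := S_simplex c n ω
      exact pr_nonneg _ _ a1 a2 a3

lemma Wd_path (hα : -2 < α) (hγ₀ : 2 ≤ γ₀) (c : AffRPSChain μ α γ₀) (u : ℕ → Fin 6) (n : ℕ) (ω : Ω)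
    (h : ω ∈ Wd c u n) :
    affGamma γ₀ α n * (S c n ω).1 = γ₀ * (S c 0 ω).1 + ∑ k ∈ Finset.range n, (affIncr α (u k)).1 ∧
    affGamma γ₀ α n * (S c n ω).2.1 = γ₀ * (S c 0 ω).2.1 + ∑ k ∈ Finset.range n, (affIncr α (u k)).2.1 ∧
    affGamma γ₀ α n * (S c n ω).2.2 = γ₀ * (S c 0 ω).2.2 + ∑ k ∈ Finset.range n, (affIncr α (u k)).2.2 := by
  induction n with
  | zero => simp [affGamma]
  | succ n ih =>
    rw [Wd_succ] at h
    obtain ⟨e1, e2, e3⟩ := ih h.1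
    have h2 : S c (n+1) ω = T γ₀ α n (u n) (S c n ω) := h.2
    have hg := gam_ge hα hγ₀ (n+1)
    have hg0 : affGamma γ₀ α (n+1) ≠ 0 := by linarith
    simp only [h2, T, Finset.sum_range_succ]
    refine ⟨?_, ?_, ?_⟩
    · rw [mul_div_cancel₀ _ hg0, e1]; ring
    · rw [mul_div_cancel₀ _ hg0, e2]; ring
    · rw [mul_div_cancel₀ _ hg0, e3]; ring

/-- block word -/
def wd (i j : ℕ) (k : ℕ) : Fin 6 := if k < i then 0 else if k < i + j then 1 else 2

lemma wd_sum (i j l : ℕ) (f : Fin 6 → ℝ) :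
    ∑ k ∈ Finset.range (i + j + l), f (wd i j k) = i * f 0 + j * f 1 + l * f 2 := by
  rw [Finset.sum_range_add, Finset.sum_range_add]
  have h1 : ∑ k ∈ Finset.range i, f (wd i j k) = ∑ k ∈ Finset.range i, f 0 := by
    refine Finset.sum_congr rfl fun k hk => ?_
    have := Finset.mem_range.1 hk
    simp [wd, this]
  have h2 : ∑ k ∈ Finset.range j, f (wd i j (i + k)) = ∑ k ∈ Finset.range j, f 1 := by
    refine Finset.sum_congr rfl fun k hk => ?_
    have := Finset.mem_range.1 hk
    simp [wd, this]
  have h3 : ∑ k ∈ Finset.range l, f (wd i j (i + j + k)) = ∑ k ∈ Finset.range l, f 2 := by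
    refine Finset.sum_congr rfl fun k hk => ?_
    have h1 : ¬ (i + j + k < i) := by omega
    have h2 : ¬ (i + j + k < i + j) := by omega
    simp only [wd, h1, h2, if_false]
  rw [h1, h2, h3]
  simp

lemma exists_xyz (m : ℝ) (h0 : 0 < m) (h1 : m < 1/27) :
    ∃ x y z : ℝ, 0 < x ∧ 0 < y ∧ 0 < z ∧ x + y + z = 1 ∧ x * y * z = m := by
  have hc : ContinuousOn (fun t : ℝ => t * t * (1 - 2 * t)) (Icc 0 (1/3)) := by fun_prop
  have := intermediate_value_Icc (by norm_num) hc
  obtain ⟨t, ⟨ht0, ht1⟩, ht⟩ := this (show m ∈ Icc _ _ by constructor <;> norm_num <;> linarith)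
  simp only at ht
  have : t ≠ 0 := by rintro rfl; norm_num at ht; linarith
  have : 0 < t := lt_of_le_of_ne ht0 this.symm
  exact ⟨t, t, 1 - 2 * t, this, this, by linarith, by ring, ht⟩

lemma approx (hα : -2 < α) (hγ₀ : 2 ≤ γ₀) (c : AffRPSChain μ α γ₀) (m : ℝ) (h0 : 0 < m) (h1 : m < 1/27)
    (ε B : ℝ) (hε : 0 < ε) : ∃ (n : ℕ) (A : Set Ω) (M : ℝ), MeasurableSet[c.F n] A ∧ 0 < μ A ∧ B ≤ affGamma γ₀ α n ∧
      |M - m| < ε ∧ ∀ ω ∈ A, Mf (S c n ω) = M := by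
  obtain ⟨x, y, z, hx, hy, hz, hs, hm⟩ := exists_xyz m h0 h1
  obtain ⟨ω₀⟩ : Nonempty Ω := nonempty_of_isProbabilityMeasure μ
  have h4 : 0 < 4 + α := by linarith
  set X0 := c.X 0 ω₀
  set Y0 := c.Y 0 ω₀
  set Z0 := c.Z 0 ω₀
  set i : ℕ → ℕ := fun n => ⌊x * n⌋₊
  set j : ℕ → ℕ := fun n => ⌊y * n⌋₊
  set l : ℕ → ℕ := fun n => ⌊z * n⌋₊
  have ti : Tendsto (fun n : ℕ => (i n : ℝ) / n) atTop (𝓝 x) :=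
    (tendsto_nat_floor_mul_div_atTop hx.le).comp tendsto_natCast_atTop_atTop
  have tj : Tendsto (fun n : ℕ => (j n : ℝ) / n) atTop (𝓝 y) :=
    (tendsto_nat_floor_mul_div_atTop hy.le).comp tendsto_natCast_atTop_atTop
  have tl : Tendsto (fun n : ℕ => (l n : ℝ) / n) atTop (𝓝 z) :=
    (tendsto_nat_floor_mul_div_atTop hz.le).comp tendsto_natCast_atTop_atTop
  have tinv : ∀ q : ℝ, Tendsto (fun n : ℕ => q / (n:ℝ)) atTop (𝓝 0) := fun q =>
    tendsto_const_nhds.div_atTop tendsto_natCast_atTop_atTop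
  have tg : Tendsto (fun n : ℕ => affGamma γ₀ α (i n + j n + l n) / n) atTop (𝓝 (4 + α)) := by
    have h := (tinv γ₀).add (((ti.add tj).add tl).const_mul (4 + α))
    rw [hs, zero_add, mul_one] at h
    refine h.congr fun n => ?_
    unfold affGamma; push_cast; ring
  have co : ∀ (q x : ℝ) (i' : ℕ → ℕ), Tendsto (fun n : ℕ => (i' n : ℝ) / n) atTop (𝓝 x) →
      Tendsto (fun n : ℕ => (γ₀ * q + (4 + α) * i' n) / affGamma γ₀ α (i n + j n + l n)) atTop (𝓝 x) := by
    intro q x i' hi'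
    have h := ((tinv (γ₀ * q)).add (hi'.const_mul (4 + α))).div tg h4.ne'
    rw [zero_add, mul_div_cancel_left₀ _ h4.ne'] at h
    refine h.congr' ?_
    filter_upwards [eventually_gt_atTop 0] with n hn
    have hn' : (n:ℝ) ≠ 0 := by exact_mod_cast hn.ne'
    show (γ₀ * q / (n:ℝ) + (4 + α) * ((i' n : ℝ) / n)) / (affGamma γ₀ α (i n + j n + l n) / n) = _
    rw [← mul_div_assoc, ← add_div, div_div_div_cancel_right₀ hn']
  have tM := ((co X0 x i ti).mul (co Y0 y j tj)).mul (co Z0 z l tl)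
  rw [hm] at tM
  have tgam : Tendsto (fun n : ℕ => affGamma γ₀ α (i n + j n + l n)) atTop atTop := by
    have h := tg.pos_mul_atTop h4 (tendsto_natCast_atTop_atTop (R := ℝ))
    refine h.congr' ?_
    filter_upwards [eventually_gt_atTop 0] with n hn
    have hn' : (n:ℝ) ≠ 0 := by exact_mod_cast hn.ne'
    exact div_mul_cancel₀ _ hn'
  obtain ⟨n, hn1, hn2⟩ := ((tM.eventually (Metric.ball_mem_nhds m hε)).and (tgam.eventually_ge_atTop B)).exists
  refine ⟨i n + j n + l n, Wd c (wd (i n) (j n)) (i n + j n + l n), _, meas_Wd c _ _, Wd_pos hα hγ₀ c _ _, hn2, hn1, ?_⟩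
  intro ω hω
  obtain ⟨e1, e2, e3⟩ := Wd_path hα hγ₀ c _ _ ω hω
  have hg := gam_ge hα hγ₀ (i n + j n + l n)
  have hg0 : affGamma γ₀ α (i n + j n + l n) ≠ 0 := by linarith
  rw [wd_sum _ _ _ (fun k => (affIncr α k).1)] at e1
  rw [wd_sum _ _ _ (fun k => (affIncr α k).2.1)] at e2
  rw [wd_sum _ _ _ (fun k => (affIncr α k).2.2)] at e3
  have i1 : (S c 0 ω).1 = X0 := c.init_X_const ω ω₀
  have i2 : (S c 0 ω).2.1 = Y0 := c.init_Y_const ω ω₀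
  have i3 : (S c 0 ω).2.2 = Z0 := c.init_Z_const ω ω₀
  rw [i1] at e1
  rw [i2] at e2
  rw [i3] at e3
  simp only [affIncr, mul_zero, add_zero, zero_add] at e1 e2 e3
  unfold Mf
  congr 1
  · congr 1
    · rw [eq_div_iff hg0, mul_comm, e1]; ring
    · rw [eq_div_iff hg0, mul_comm, e2]; ring
  · rw [eq_div_iff hg0, mul_comm, e3]; ring

lemma interval_pos (hα : -2 < α) (hγ₀ : 2 ≤ γ₀) (c : AffRPSChain μ α γ₀) (L : Ω → ℝ)
    (hLm : StronglyMeasurable[⨆ n, c.F n] L)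
    (hL : ∀ᵐ ω ∂μ, Tendsto (fun n => Mf (S c n ω)) atTop (𝓝 (L ω)) ∧ 0 < L ω ∧ L ω ≤ 1/27)
    (a b : ℝ) (ha : 0 ≤ a) (hab : a < b) (hb : b ≤ 1/27) (hn : ∀ᵐ ω ∂μ, L ω ∉ Ioo a b) : False := by
  obtain ⟨e, C, he, hC, hLi, hLi2, hbd⟩ := bounds_lim hα hγ₀ c L hLm hL
  obtain ⟨δ, hδ⟩ : ∃ δ, δ = (b - a)/4 := ⟨_, rfl⟩
  have hδ0 : 0 < δ := by rw [hδ]; linarith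
  obtain ⟨n, A, M, hA, hAp, hB, hMm, hAM⟩ := approx hα hγ₀ c ((a+b)/2) (by linarith) (by linarith) δ
    (4 * C / δ^2) hδ0
  have hg := gam_ge hα hγ₀ n
  set g := affGamma γ₀ α n
  have hA' : MeasurableSet A := c.F.le n _ hA
  have hDi : Integrable (fun ω => 1/27 - L ω) μ := (integrable_const _).sub hLi
  have hAr : 0 < μ.real A := by
    rw [measureReal_def]; exact ENNReal.toReal_pos hAp.ne' (measure_ne_top _ _)
  obtain ⟨ω₁, hω₁⟩ : A.Nonempty := nonempty_of_measure_ne_zero hAp.ne'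
  have hM0 : 0 ≤ M := by rw [← hAM ω₁ hω₁]; exact Mf_nonneg c n ω₁
  have hM1 : M ≤ 1/27 := by rw [← hAM ω₁ hω₁]; exact Mf_le' c n ω₁
  obtain ⟨d, hd⟩ : ∃ d, d = 1/27 - M := ⟨_, rfl⟩
  have hd0 : 0 ≤ d := by rw [hd]; linarith
  have hd1 : d ≤ 1 := by rw [hd]; linarith
  have I1 : d * μ.real A ≤ ∫ ω in A, (1/27 - L ω) ∂μ := by
    rw [← setIntegral_condExp (c.F.le n) hDi hA]
    have : ∫ ω in A, d ∂μ ≤ ∫ ω in A, μ[fun ω => 1/27 - L ω | c.F n] ω ∂μ := by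
      apply setIntegral_mono_on_ae (integrable_const _).integrableOn integrable_condExp.integrableOn hA'
      filter_upwards [hbd n] with ω ⟨h1, _⟩ hω
      rw [hAM ω hω, ← hd] at h1
      have : 0 ≤ e * M / g := by positivity
      linarith
    simpa [mul_comm] using this
  have I2 : ∫ ω in A, (1/27 - L ω)^2 ∂μ ≤ (d^2 + C * d / g + C / g^2) * μ.real A := by
    rw [← setIntegral_condExp (c.F.le n) hLi2 hA]
    have : ∫ ω in A, μ[fun ω => (1/27 - L ω)^2 | c.F n] ω ∂μ ≤ ∫ ω in A, (d^2 + C * d / g + C / g^2) ∂μ := by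
      apply setIntegral_mono_on_ae integrable_condExp.integrableOn (integrable_const _).integrableOn hA'
      filter_upwards [hbd n] with ω ⟨_, h1⟩ hω
      rw [hAM ω hω, ← hd] at h1
      exact h1
    rw [setIntegral_const, smul_eq_mul, mul_comm] at this
    exact this
  have I3 : δ^2 * μ.real A ≤ ∫ ω in A, ((1/27 - L ω)^2 - 2 * d * (1/27 - L ω) + d^2) ∂μ := by
    have : ∫ ω in A, δ^2 ∂μ ≤ ∫ ω in A, ((1/27 - L ω)^2 - 2 * d * (1/27 - L ω) + d^2) ∂μ := by
      apply setIntegral_mono_on_ae (integrable_const _).integrableOn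
        (((hLi2.sub (hDi.const_mul (2*d))).add (integrable_const _)).integrableOn) hA'
      filter_upwards [hn] with ω h1 _
      have h2 : (1/27 - L ω)^2 - 2 * d * (1/27 - L ω) + d^2 = (M - L ω)^2 := by rw [hd]; ring
      show δ^2 ≤ (1/27 - L ω)^2 - 2 * d * (1/27 - L ω) + d^2
      rw [h2]
      rw [abs_lt] at hMm
      have h3 : L ω ≤ a ∨ b ≤ L ω := by
        by_contra hh
        push Not at hh
        exact h1 hh
      rcases h3 with h3 | h3
      · nlinarith
      · nlinarith
    simpa [mul_comm] using this
  have hmul : Integrable (fun ω => 2 * d * (1/27 - L ω)) μ := hDi.const_mul (2 * d)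
  have hsub : Integrable (fun ω => (1/27 - L ω)^2 - 2 * d * (1/27 - L ω)) μ := hLi2.sub hmul
  rw [integral_add hsub.integrableOn (integrable_const _).integrableOn,
    integral_sub hLi2.integrableOn hmul.integrableOn, integral_const_mul,
    setIntegral_const, smul_eq_mul] at I3
  have I4 : δ^2 * μ.real A ≤ (C * d / g + C / g^2) * μ.real A := by
    have := mul_le_mul_of_nonneg_left I1 (show 0 ≤ 2 * d by positivity)
    nlinarith
  have I5 : δ^2 ≤ C * d / g + C / g^2 := le_of_mul_le_mul_right I4 hAr
  have hg0 : 0 < g := by linarith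
  have h1 : C * d / g ≤ C / g := by gcongr; nlinarith
  have h2 : C / g^2 ≤ C / g := by
    apply div_le_div_of_nonneg_left hC.le hg0; nlinarith
  have h3 : 4 * C ≤ g * δ^2 := by
    rwa [div_le_iff₀ (by positivity)] at hB
  have h4 : δ^2 ≤ 2 * C / g := by
    have : 2 * C / g = C / g + C / g := by ring
    linarith
  rw [le_div_iff₀ hg0] at h4
  nlinarith

end RPS

namespace RPS

lemma final_det {γ₀ α : ℝ} (hα : -2 < α) (hγ₀ : 2 ≤ γ₀) (s : ℕ → St) (M δ m : ℝ)
    (hs : ∀ n, Sx (s n)) (hM : Tendsto (fun n => Mf (s n)) atTop (𝓝 M)) (hδ : 0 < δ)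
    (hMδ : δ < 1/27 - M) (hm : 0 < m) (hm' : ∀ n, m ≤ Mf (s n))
    (hp : ∀ n, ∃ i, s (n+1) = T γ₀ α n i (s n))
    (hl : ∃ l, Tendsto (fun n => ∑ k ∈ Finset.range n,
      (cr (s k) (s (k+1)) - (2 + α) * dr (s k) / affGamma γ₀ α (k+1)) / max (nw (s k)) δ) atTop (𝓝 l)) :
    (¬ ∃ p : St, Tendsto s atTop (𝓝 p)) ∧
    ∀ p : St, MapClusterPt p atTop s ↔ (Sx p ∧ Mf p = M) := by
  have h4 : 0 < 4 + α := by linarith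
  have hcl : ∀ p : St, MapClusterPt p atTop s ↔ (Sx p ∧ Mf p = M) := by
    intro p
    constructor
    · intro h
      refine ⟨?_, ?_⟩
      · have hc : IsClosed {s : St | Sx s} := isCompact_Sx.isClosed
        have : p ∈ closure {s : St | Sx s} := by
          rw [mem_closure_iff_clusterPt]
          refine ClusterPt.mono h ?_
          rw [le_principal_iff]
          exact Filter.mem_map.2 (Filter.univ_mem' hs)
        rw [hc.closure_eq] at this
        exact this
      · have h1 : MapClusterPt (Mf p) atTop (fun n => Mf (s n)) :=
          h.continuousAt_comp continuous_Mf.continuousAt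
        have h2 : ClusterPt (Mf p) (𝓝 M) := ClusterPt.mono h1 hM
        exact eq_of_nhds_neBot h2
    · rintro ⟨h1, h2⟩
      obtain ⟨k0, hk, hd⟩ := ang_div hα hγ₀ s M δ m hs hM hδ hMδ hm hm' hl
      have tk : Tendsto (fun k => k0 + k) atTop (atTop : Filter ℕ) :=
        tendsto_atTop_mono (fun k => Nat.le_add_left k k0) tendsto_id
      have := cluster_det (fun k => s (k0 + k)) M δ (fun k => (4+α) / affGamma γ₀ α (k0+k+1))
        (fun n => hs _) (hM.comp tk) (by linarith) hδ ?_ ?_ (fun n => hk _ (Nat.le_add_right _ _)) hd p h1 h2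
      · exact MapClusterPt.of_comp tk this
      · intro n
        obtain ⟨i, hi⟩ := hp (k0 + n)
        obtain ⟨a1, a2, a3, a4⟩ := hs (k0 + n)
        have := disp hα hγ₀ (k0 + n) (s (k0 + n)) a1 a2 a3 a4 i
        rw [← hi] at this
        exact this
      · have hs : Summable (fun k : ℕ => (4 + α)^2 * (1 / ((k:ℝ)+1)^2)) := by
          apply Summable.mul_left
          have := (summable_nat_add_iff 1).2 (Real.summable_one_div_nat_pow.2 (show 1 < 2 by norm_num))
          simpa using this
        refine hs.of_nonneg_of_le (fun k => sq_nonneg _) fun k => ?_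
        rw [div_pow, ← mul_one_div]
        have : (k:ℝ) + 1 ≤ affGamma γ₀ α (k0+k+1) := by
          unfold affGamma; push_cast
          have : (0:ℝ) ≤ k := Nat.cast_nonneg k
          have : (0:ℝ) ≤ k0 := Nat.cast_nonneg k0
          nlinarith
        gcongr
  refine ⟨?_, hcl⟩
  rintro ⟨p, hpt⟩
  obtain ⟨⟨q1, q2, q3, q4⟩, q5⟩ := (hcl p).1 hpt.mapClusterPt
  have h1 : MapClusterPt ((p.2.1, p.2.2, p.1) : St) atTop s := by
    refine (hcl _).2 ⟨⟨q2, q3, q1, by simp only; linarith⟩, ?_⟩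
    rw [← q5]; simp only [Mf]; ring
  have h2 : ClusterPt ((p.2.1, p.2.2, p.1) : St) (𝓝 p) := ClusterPt.mono h1 hpt
  have h3 : ((p.2.1, p.2.2, p.1) : St) = p := eq_of_nhds_neBot h2
  have e1 : p.2.1 = p.1 := congrArg Prod.fst h3
  have e2 : p.2.2 = p.2.1 := congrArg (fun q : St => q.2.1) h3
  have e3 : p.1 = 1/3 := by linarith
  have : M = 1/27 := by
    rw [← q5, Mf, e2, e1, e3]; norm_num
  linarith

end RPS

/-- In the affine rock–paper–scissors chain with `α > -2`: almost surely
`M_n = X_n Y_n Z_n` converges to a limit `M ∈ [0, 1/27)`, the sequence `(X_n, Y_n, Z_n)`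
does not converge and its set of cluster points is exactly `{(x,y,z) ∈ Δ² : xyz = M}`;
moreover the law of `M` gives positive probability to every nonempty open subinterval of
`(0, 1/27)`. -/
theorem affine_rps_main
    {Ω : Type*} [MeasurableSpace Ω] (μ : Measure Ω) [IsProbabilityMeasure μ]
    (α γ₀ : ℝ) (hα : -2 < α) (hγ₀ : 2 ≤ γ₀) (c : AffRPSChain μ α γ₀) :
    (∀ᵐ ω ∂μ, ∃ M : ℝ, M ∈ Set.Ico (0 : ℝ) (1/27) ∧
      Tendsto (fun n => c.X n ω * c.Y n ω * c.Z n ω) atTop (𝓝 M) ∧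
      (¬ ∃ p : ℝ × ℝ × ℝ, Tendsto (fun n => (c.X n ω, c.Y n ω, c.Z n ω)) atTop (𝓝 p)) ∧
      (∀ p : ℝ × ℝ × ℝ,
        MapClusterPt p atTop (fun n => (c.X n ω, c.Y n ω, c.Z n ω)) ↔
          (0 ≤ p.1 ∧ 0 ≤ p.2.1 ∧ 0 ≤ p.2.2 ∧ p.1 + p.2.1 + p.2.2 = 1 ∧
            p.1 * p.2.1 * p.2.2 = M))) ∧
    (∀ a b : ℝ, 0 ≤ a → a < b → b ≤ 1/27 →
      0 < μ {ω | ∃ M ∈ Set.Ioo a b,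
        Tendsto (fun n => c.X n ω * c.Y n ω * c.Z n ω) atTop (𝓝 M)}) := by
  obtain ⟨L, hLm, hL⟩ := RPS.exists_lim hα hγ₀ c
  have hlt := RPS.L_lt hα hγ₀ c L hLm hL
  refine ⟨?_, ?_⟩
  · have hang := ae_all_iff.2 (fun j : ℕ => RPS.ae_ang hα hγ₀ c (1/((j:ℝ)+1)) (by positivity))
    filter_upwards [hL, hlt, RPS.ae_lower hα hγ₀ c, RPS.ae_path hα hγ₀ c, hang]
      with ω ⟨h1, h2, _⟩ h3 ⟨m, hm, hm'⟩ h5 h6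
    obtain ⟨j, hj⟩ := exists_nat_one_div_lt (show 0 < 1/27 - L ω by linarith)
    obtain ⟨r1, r2⟩ := RPS.final_det hα hγ₀ (fun n => RPS.S c n ω) (L ω) (1/((j:ℝ)+1)) m
      (fun n => RPS.S_simplex c n ω) h1 (by positivity) hj hm hm' h5 (h6 j)
    refine ⟨L ω, ⟨h2.le, h3⟩, h1, r1, fun p => (r2 p).trans ?_⟩
    constructor
    · rintro ⟨⟨a1, a2, a3, a4⟩, a5⟩
      exact ⟨a1, a2, a3, a4, a5⟩
    · rintro ⟨a1, a2, a3, a4, a5⟩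
      exact ⟨⟨a1, a2, a3, a4⟩, a5⟩
  · intro a b ha hab hb
    rw [pos_iff_ne_zero]
    intro h0
    refine RPS.interval_pos hα hγ₀ c L hLm hL a b ha hab hb ?_
    filter_upwards [hL, measure_eq_zero_iff_ae_notMem.1 h0] with ω h1 h2 h3
    exact h2 ⟨L ω, h3, h1.1⟩
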